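/- arXiv:1404.5662 — 3 statements merged into one kernel-verified Lean document; each statement's English description precedes it below -/
import Mathlib

section
/- Let P be a d-dimensional simplicial polytope that is a local extremum (with respect to the Hausdorff metric on the space of d-dimensional convex bodies) of the functional K ↦ L_K, and assume P is isotropic. Let F be a facet of P with vertices v_1, …, v_d. Then for every k ∈ {1, …, d}: Σ_{1 ≤ i ≤ j ≤ d} (1 + δ_{ik} + δ_{jk}) ⟨v_i, v_j⟩ = (d+1)(d+2)²/2, where δ is the Kronecker delta and ⟨·,·⟩ is the standard inner product on ℝ^d. -/
open MeasureTheory Finset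
open scoped ProbabilityTheory
open scoped RealInnerProductSpace

noncomputable section

abbrev Euc (d : ℕ) := EuclideanSpace ℝ (Fin d)

section GeneralSpace

variable {V : Type*} [NormedAddCommGroup V] [NormedSpace ℝ V]

/-- The dimension of a set: the rank of the direction of its affine span. -/
noncomputable def sdim (F : Set V) : ℕ := Module.finrank ℝ (affineSpan ℝ F).direction

/-- `F` is a simplex with `n` vertices (an `(n-1)`-dimensional simplex). -/
def IsSimplexWith (n : ℕ) (F : Set V) : Prop :=
  ∃ w : Fin n → V, AffineIndependent ℝ w ∧ F = convexHull ℝ (Set.range w)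

/-- A polytope is the convex hull of finitely many points. -/
def IsPolytope (P : Set V) : Prop := ∃ S : Finset V, P = convexHull ℝ (S : Set V)

/-- A facet of a `d`-dimensional polytope: an exposed face of dimension `d - 1`. -/
def IsFacetOf (d : ℕ) (P F : Set V) : Prop := IsExposed ℝ P F ∧ sdim F = d - 1

/-- A `d`-dimensional simplicial polytope: a polytope of dimension `d`, each facet of which
is a `(d-1)`-dimensional simplex (i.e. has `d` affinely independent vertices). -/
def IsSimplicialPolytope (d : ℕ) (P : Set V) : Prop :=
  IsPolytope P ∧ sdim P = d ∧ ∀ F : Set V, IsFacetOf d P F → IsSimplexWith d F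

end GeneralSpace

/-- A convex body: compact, convex, with nonempty interior. -/
def IsConvexBody {d : ℕ} (K : Set (Euc d)) : Prop :=
  IsCompact K ∧ Convex ℝ K ∧ (interior K).Nonempty

/-- The barycenter `μ_K` of the uniform distribution on `K`. -/
noncomputable def centroid {d : ℕ} (K : Set (Euc d)) : Euc d :=
  (volume K).toReal⁻¹ • ∫ x in K, x

/-- The covariance matrix `A(K)` of the uniform distribution on `K`. -/
noncomputable def covMatrix {d : ℕ} (K : Set (Euc d)) : Matrix (Fin d) (Fin d) ℝ :=
  Matrix.of fun i j =>
    (volume K).toReal⁻¹ * ∫ x in K, (x i - centroid K i) * (x j - centroid K j)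

/-- The isotropic constant `L_K`, defined by `L_K ^ (2d) = det A(K) / vol(K) ^ 2`. -/
noncomputable def isoConst {d : ℕ} (K : Set (Euc d)) : ℝ :=
  ((covMatrix K).det / (volume K).toReal ^ 2) ^ ((2 * (d : ℝ))⁻¹)

/-- `K` is isotropic: its barycenter is the origin and its covariance matrix is the identity. -/
def IsIsotropic {d : ℕ} (K : Set (Euc d)) : Prop :=
  centroid K = 0 ∧ covMatrix K = 1

/-- `P` is a local extremum (local maximum or local minimum) of `K ↦ L_K` among convex bodies,
with respect to the Hausdorff metric. -/
def IsLocalExtremumOfIsoConst {d : ℕ} (P : Set (Euc d)) : Prop :=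
  (∃ ε > 0, ∀ K : Set (Euc d), IsConvexBody K →
      Metric.hausdorffDist K P < ε → isoConst K ≤ isoConst P) ∨
  (∃ ε > 0, ∀ K : Set (Euc d), IsConvexBody K →
      Metric.hausdorffDist K P < ε → isoConst P ≤ isoConst K)

/-- The polar angle of `(a, b) ∈ ℝ²`, normalized to lie in `[-π, π)`. -/
noncomputable def polarAngle (a b : ℝ) : ℝ :=
  if Complex.arg ⟨a, b⟩ = Real.pi then -Real.pi else Complex.arg ⟨a, b⟩

/-!
Deform `P` near the facet with vertices `v i` in two ways: cut off a small neighbourhood of `v k` by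
hyperplanes through the other vertices, or add a point above a point `c` of the relative interior of
the facet. After rescaling heights over the facet, the removed and the added sliver converge to the
same kind of limit, a simplex over the facet with apex above `v k` or `c`. So the derivative of the
integral of any continuous function is, up to sign, its integral over the facet against the tent
function with peak at `v k` or `c`. At an isotropic body the derivative of `L_K` is a positive
multiple of the derivative of `∫ (‖x‖² - (d + 2))`. Letting `c → v k`, the two variations become
opposite, so at a local extremum both vanish. Second moments of a simplex turn this into
`‖v k + ∑ v i‖² + ‖v k‖² + ∑ ‖v i‖² = (d + 1) (d + 2)²`, which expands to the claim.
-/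
section AffineMaps

variable {E : Type*} [NormedAddCommGroup E] [NormedSpace ℝ E]

/-- The affine analogue `x ↦ x + φ x • u` of `LinearMap.transvection`. -/
def affineTransvection (φ : E →ᵃ[ℝ] ℝ) (u : E) : E →ᵃ[ℝ] E where
  toFun x := x + φ x • u
  linear := LinearMap.transvection φ.linear u
  map_vadd' x y := by
    rw [φ.map_vadd, LinearMap.transvection.apply]
    simp only [vadd_eq_add, add_smul]
    abel

lemma affineTransvection_apply (φ : E →ᵃ[ℝ] ℝ) (u x : E) :
    affineTransvection φ u x = x + φ x • u := rfl

lemma det_linear_affineTransvection [FiniteDimensional ℝ E] (φ : E →ᵃ[ℝ] ℝ) (u : E) :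
    (affineTransvection φ u).linear.det = 1 + φ.linear u :=
  LinearMap.transvection.det φ.linear u

lemma map_affineTransvection (ψ φ : E →ᵃ[ℝ] ℝ) (u x : E) :
    ψ (affineTransvection φ u x) = ψ x + φ x * ψ.linear u := by
  rw [affineTransvection_apply, add_comm, ← vadd_eq_add, AffineMap.map_vadd, map_smul,
    vadd_eq_add, smul_eq_mul, add_comm]

variable [MeasurableSpace E] [BorelSpace E] [FiniteDimensional ℝ E]
  (μ : Measure E) [μ.IsAddHaarMeasure]

lemma map_affineMap_addHaar {T : E →ᵃ[ℝ] E} (hT : T.linear.det ≠ 0) :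
    μ.map T = ENNReal.ofReal |T.linear.det⁻¹| • μ := by
  have hlin : Measurable T.linear := T.linear.continuous_of_finiteDimensional.measurable
  have hT_comp : T = (· + T 0) ∘ T.linear := T.decomp
  rw [hT_comp, ← Measure.map_map (measurable_add_const _) hlin,
    Measure.map_linearMap_addHaar_eq_smul_addHaar μ hT, Measure.map_smul,
    map_add_right_eq_self]

lemma setIntegral_preimage_affineMap {F : Type*} [NormedAddCommGroup F] [NormedSpace ℝ F]
    {T : E →ᵃ[ℝ] E} (hT : T.linear.det ≠ 0) {S : Set E} (hS : MeasurableSet S)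
    {f : E → F} (hf : AEStronglyMeasurable f μ) :
    ∫ x in T ⁻¹' S, f (T x) ∂μ = |T.linear.det|⁻¹ • ∫ x in S, f x ∂μ := by
  have hmap := map_affineMap_addHaar μ hT
  rw [← setIntegral_map hS (hmap ▸ hf.smul_measure _)
    T.continuous_of_finiteDimensional.aemeasurable, hmap, Measure.restrict_smul,
    integral_smul_measure, ENNReal.toReal_ofReal (abs_nonneg _), abs_inv]

lemma addHaar_setOf_affineMap_eq_zero {φ : E →ᵃ[ℝ] ℝ} {x : E} (hx : φ x ≠ 0) :
    μ {y | φ y = 0} = 0 := by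
  have hne : (AffineSubspace.mk' (0 : ℝ) ⊥).comap φ ≠ ⊤ := fun htop ↦ hx <| by
    have hmem : x ∈ (AffineSubspace.mk' (0 : ℝ) ⊥).comap φ := htop ▸ AffineSubspace.mem_top ℝ E x
    simpa using hmem
  convert Measure.addHaar_affineSubspace μ _ hne
  ext y
  simp

end AffineMaps

section SimplexMoments

variable {E κ : Type*} [NormedAddCommGroup E] [NormedSpace ℝ E]

lemma coord_linear_sub (b : AffineBasis κ ℝ E) (i : κ) (x y : E) :
    (b.coord i).linear (x - y) = b.coord i x - b.coord i y :=
  (b.coord i).linearMap_vsub x y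

lemma mem_convexHull_range_iff_coord_nonneg (b : AffineBasis κ ℝ E) {x : E} :
    x ∈ convexHull ℝ (Set.range b) ↔ ∀ i, 0 ≤ b.coord i x := by
  rw [b.convexHull_eq_nonneg_coord, Set.mem_ofPred_eq]

lemma isCompact_convexHull_range [Finite κ] (b : κ → E) :
    IsCompact (convexHull ℝ (Set.range b)) :=
  (Set.finite_range b).isCompact_convexHull ℝ

/-- The affine map that fixes every vertex of the simplex `b` except `b j`, which it sends to the
midpoint of `b i` and `b j`. -/
def edgeContraction (b : AffineBasis κ ℝ E) (i j : κ) : E →ᵃ[ℝ] E :=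
  affineTransvection ((2⁻¹ : ℝ) • b.coord j) (b i - b j)

lemma coord_edgeContraction [DecidableEq κ] (b : AffineBasis κ ℝ E) (i j l : κ) (x : E) :
    b.coord l (edgeContraction b i j x)
      = b.coord l x + b.coord j x / 2 * ((if l = i then 1 else 0) - if l = j then 1 else 0) := by
  rw [edgeContraction, map_affineTransvection, coord_linear_sub, b.coord_apply, b.coord_apply,
    AffineMap.coe_smul, Pi.smul_apply, smul_eq_mul, div_eq_inv_mul]

lemma edgeContraction_preimage (b : AffineBasis κ ℝ E) {i j : κ} (hij : i ≠ j) :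
    edgeContraction b i j ⁻¹' (convexHull ℝ (Set.range b) ∩ {x | b.coord j x ≤ b.coord i x})
      = convexHull ℝ (Set.range b) := by
  classical
  ext x
  simp only [Set.mem_preimage, Set.mem_inter_iff, mem_convexHull_range_iff_coord_nonneg,
    Set.mem_ofPred_eq, coord_edgeContraction, if_true, if_neg hij, if_neg hij.symm]
  constructor
  · rintro ⟨hnonneg, hle⟩ l
    have hl := hnonneg l
    split_ifs at hl <;> subst_vars <;> linarith
  · intro hnonneg
    refine ⟨fun l ↦ ?_, ?_⟩
    · have hl := hnonneg l
      have hj := hnonneg j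
      split_ifs <;> subst_vars <;> linarith
    · have hi := hnonneg i
      linarith

variable [MeasurableSpace E] [BorelSpace E] [FiniteDimensional ℝ E]
  (μ : Measure E) [μ.IsAddHaarMeasure]

lemma measurableSet_convexHull_range_inter_coord_le [Finite κ] (b : AffineBasis κ ℝ E)
    (i j : κ) : MeasurableSet (convexHull ℝ (Set.range b) ∩ {x | b.coord j x ≤ b.coord i x}) :=
  (isCompact_convexHull_range b).measurableSet.inter
    (isClosed_le (continuous_barycentric_coord b j)
      (continuous_barycentric_coord b i)).measurableSet

lemma setIntegral_comp_edgeContraction [Finite κ] (b : AffineBasis κ ℝ E) {i j : κ} (hij : i ≠ j)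
    {f : E → ℝ} (hf : Continuous f) :
    ∫ x in convexHull ℝ (Set.range b), f (edgeContraction b i j x) ∂μ
      = 2 * ∫ x in convexHull ℝ (Set.range b) ∩ {x | b.coord j x ≤ b.coord i x}, f x ∂μ := by
  classical
  have hdet : (edgeContraction b i j).linear.det = 2⁻¹ := by
    rw [edgeContraction, det_linear_affineTransvection, AffineMap.smul_linear,
      LinearMap.smul_apply, coord_linear_sub, b.coord_apply_eq, b.coord_apply_ne hij.symm]
    norm_num
  have hcov := setIntegral_preimage_affineMap μ (T := edgeContraction b i j)
    (by rw [hdet]; norm_num) (measurableSet_convexHull_range_inter_coord_le b i j)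
    hf.aestronglyMeasurable
  rwa [edgeContraction_preimage b hij, hdet, abs_of_pos (by norm_num), inv_inv,
    smul_eq_mul] at hcov

lemma two_mul_setIntegral_eq_edgeContraction_add [Finite κ] (b : AffineBasis κ ℝ E) {i j : κ}
    (hij : i ≠ j) {f : E → ℝ} (hf : Continuous f) :
    2 * ∫ x in convexHull ℝ (Set.range b), f x ∂μ
      = ∫ x in convexHull ℝ (Set.range b), f (edgeContraction b i j x) ∂μ
        + ∫ x in convexHull ℝ (Set.range b), f (edgeContraction b j i x) ∂μ := by
  have hunion : convexHull ℝ (Set.range b)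
      = convexHull ℝ (Set.range b) ∩ {x | b.coord j x ≤ b.coord i x}
        ∪ convexHull ℝ (Set.range b) ∩ {x | b.coord i x ≤ b.coord j x} := by
    rw [← Set.inter_union_distrib_left]
    exact (Set.inter_eq_left.2 fun x _ ↦ le_total (b.coord j x) (b.coord i x)).symm
  have hbisector : μ {x | (b.coord i - b.coord j) x = 0} = 0 :=
    addHaar_setOf_affineMap_eq_zero μ (x := b i) (by simp [b.coord_apply_ne hij.symm])
  have hint := hf.continuousOn.integrableOn_compact (μ := μ) (isCompact_convexHull_range b)
  rw [setIntegral_comp_edgeContraction μ b hij hf, setIntegral_comp_edgeContraction μ b hij.symm hf,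
    ← mul_add, ← setIntegral_union₀ ?_
      (measurableSet_convexHull_range_inter_coord_le b j i).nullMeasurableSet
      (hint.mono_set Set.inter_subset_left) (hint.mono_set Set.inter_subset_left), ← hunion]
  refine measure_mono_null (fun x hx ↦ ?_) hbisector
  exact sub_eq_zero.2 (le_antisymm hx.2.2 hx.1.2)

lemma integrableOn_coord_mul_coord [Finite κ] (b : AffineBasis κ ℝ E) (i j : κ) :
    IntegrableOn (fun x ↦ b.coord i x * b.coord j x) (convexHull ℝ (Set.range b)) μ :=
  ((continuous_barycentric_coord b i).mul
    (continuous_barycentric_coord b j)).continuousOn.integrableOn_compact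
    (isCompact_convexHull_range b)

lemma three_mul_setIntegral_coord_sq [Finite κ] (b : AffineBasis κ ℝ E) {i j : κ} (hij : i ≠ j) :
    3 * ∫ x in convexHull ℝ (Set.range b), b.coord i x * b.coord i x ∂μ
      = (∫ x in convexHull ℝ (Set.range b), b.coord j x * b.coord j x ∂μ)
        + 4 * ∫ x in convexHull ℝ (Set.range b), b.coord i x * b.coord j x ∂μ := by
  classical
  have hbisect := two_mul_setIntegral_eq_edgeContraction_add μ b hij
    (f := fun x ↦ b.coord i x * b.coord i x) ((continuous_barycentric_coord b i).mul
      (continuous_barycentric_coord b i))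
  have hint := integrableOn_coord_mul_coord μ b
  have htoward : ∀ x, b.coord i (edgeContraction b i j x) * b.coord i (edgeContraction b i j x)
      = b.coord i x * b.coord i x + b.coord i x * b.coord j x
        + 4⁻¹ * (b.coord j x * b.coord j x) := fun x ↦ by
    rw [coord_edgeContraction, if_pos rfl, if_neg hij]; ring
  have haway : ∀ x, b.coord i (edgeContraction b j i x) * b.coord i (edgeContraction b j i x)
      = 4⁻¹ * (b.coord i x * b.coord i x) := fun x ↦ by
    rw [coord_edgeContraction, if_pos rfl, if_neg hij]; ring
  simp only [htoward, haway] at hbisect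
  rw [integral_add ?_ ((hint j j).const_mul _), integral_add (hint i i) (hint i j),
    integral_const_mul, integral_const_mul] at hbisect
  · linarith
  · exact (hint i i).add (hint i j)

variable [Fintype κ]

lemma measureReal_convexHull_range_eq_sum (b : AffineBasis κ ℝ E) :
    μ.real (convexHull ℝ (Set.range b))
      = ∑ i, ∑ j, ∫ x in convexHull ℝ (Set.range b), b.coord i x * b.coord j x ∂μ := by
  have hone : ∀ x, ∑ i, ∑ j, b.coord i x * b.coord j x = 1 := fun x ↦ by
    rw [← Finset.sum_mul_sum, b.sum_coord_apply_eq_one, one_mul]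
  have hint := integrableOn_coord_mul_coord μ b
  calc μ.real (convexHull ℝ (Set.range b))
      = ∫ x in convexHull ℝ (Set.range b), ∑ i, ∑ j, b.coord i x * b.coord j x ∂μ := by
        simp [hone]
    _ = ∑ i, ∫ x in convexHull ℝ (Set.range b), ∑ j, b.coord i x * b.coord j x ∂μ :=
        integral_finsetSum _ fun i _ ↦ integrable_finsetSum _ fun j _ ↦ hint i j
    _ = _ := Finset.sum_congr rfl fun i _ ↦ integral_finsetSum _ fun j _ ↦ hint i j

lemma setIntegral_coord_mul_coord [DecidableEq κ] (b : AffineBasis κ ℝ E) (i j : κ) :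
    (Fintype.card κ : ℝ) * (Fintype.card κ + 1) *
        ∫ x in convexHull ℝ (Set.range b), b.coord i x * b.coord j x ∂μ
      = (if i = j then 2 else 1) * μ.real (convexHull ℝ (Set.range b)) := by
  obtain ⟨M, hM⟩ : ∃ M : κ → κ → ℝ,
      ∀ k l, ∫ x in convexHull ℝ (Set.range b), b.coord k x * b.coord l x ∂μ = M k l :=
    ⟨_, fun _ _ ↦ rfl⟩
  have hsymm : ∀ k l, M k l = M l k := fun k l ↦ by simp only [← hM, mul_comm]
  have hrel : ∀ k l, k ≠ l → 3 * M k k = M l l + 4 * M k l := fun k l hkl ↦ by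
    simpa only [hM] using three_mul_setIntegral_coord_sq μ b hkl
  have hdiag : ∀ k l, M k k = M l l := fun k l ↦ by
    rcases eq_or_ne k l with rfl | hkl
    · rfl
    · linarith [hrel k l hkl, hrel l k hkl.symm, hsymm k l]
  obtain ⟨c, hc⟩ : ∃ c, ∀ k l, M k l = (if k = l then 2 else 1) * c := by
    refine ⟨M i i / 2, fun k l ↦ ?_⟩
    split_ifs with hkl
    · rw [← hkl, hdiag k i]; ring
    · linarith [hrel k l hkl, hdiag k i, hdiag l i]
  have hrow : ∀ k : κ, ∑ l, (if k = l then (2 : ℝ) else 1) = Fintype.card κ + 1 := fun k ↦ by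
    have hsplit : ∀ l, (if k = l then (2 : ℝ) else 1) = 1 + if k = l then 1 else 0 := fun l ↦ by
      split_ifs <;> norm_num
    simp [hsplit, Finset.sum_add_distrib]
  have hvol : μ.real (convexHull ℝ (Set.range b))
      = Fintype.card κ * (Fintype.card κ + 1) * c := by
    simp only [measureReal_convexHull_range_eq_sum, hM, hc, ← Finset.sum_mul, hrow,
      Finset.sum_const, Finset.card_univ, nsmul_eq_mul]
  rw [hvol, hM, hc]
  ring

lemma setIntegral_norm_sq_sum_coord_smul {H : Type*} [NormedAddCommGroup H] [InnerProductSpace ℝ H]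
    (b : AffineBasis κ ℝ E) (p : κ → H) :
    (Fintype.card κ : ℝ) * (Fintype.card κ + 1) *
        ∫ x in convexHull ℝ (Set.range b), ‖∑ i, b.coord i x • p i‖ ^ 2 ∂μ
      = μ.real (convexHull ℝ (Set.range b)) * (‖∑ i, p i‖ ^ 2 + ∑ i, ‖p i‖ ^ 2) := by
  classical
  have hexpand : ∀ x, ‖∑ i, b.coord i x • p i‖ ^ 2
      = ∑ i, ∑ j, b.coord i x * b.coord j x * ⟪p i, p j⟫ := fun x ↦ by
    rw [← real_inner_self_eq_norm_sq, sum_inner]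
    simp only [inner_sum, real_inner_smul_left, real_inner_smul_right, mul_left_comm, mul_assoc]
  have hint := fun i j ↦ (integrableOn_coord_mul_coord μ b i j).mul_const ⟪p i, p j⟫
  simp only [hexpand]
  rw [integral_finsetSum _ fun i _ ↦ integrable_finsetSum _ fun j _ ↦ hint i j]
  simp only [integral_finsetSum _ fun j _ ↦ hint _ j, integral_mul_const, Finset.mul_sum,
    ← mul_assoc, setIntegral_coord_mul_coord]
  have hsplit : ∀ i j, (if i = j then (2 : ℝ) else 1) * ⟪p i, p j⟫
      = ⟪p i, p j⟫ + if i = j then ⟪p i, p j⟫ else 0 := fun i j ↦ by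
    split_ifs <;> ring
  simp only [mul_right_comm _ (μ.real _), ← Finset.sum_mul, hsplit, Finset.sum_add_distrib,
    Finset.sum_ite_eq, Finset.mem_univ, if_true]
  rw [← real_inner_self_eq_norm_sq (∑ i, p i), sum_inner, mul_comm]
  simp only [inner_sum, real_inner_self_eq_norm_sq]

end SimplexMoments

section Flattening

open Filter Topology

variable {E κ : Type*} [NormedAddCommGroup E] [NormedSpace ℝ E]

/-- The affine map that fixes the facet of the simplex `b` opposite to the apex `b o` and moves the
apex to `c + t • (b o - c)`. For `c` in the hyperplane of that facet it is, at `t = 0`, the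
projection along `b o - c` onto this hyperplane, and it scales heights above it by `t`. -/
def flatten (b : AffineBasis κ ℝ E) (o : κ) (c : E) (t : ℝ) : E →ᵃ[ℝ] E :=
  affineTransvection ((1 - t) • b.coord o) (c - b o)

lemma flatten_apply (b : AffineBasis κ ℝ E) (o : κ) (c : E) (t : ℝ) (x : E) :
    flatten b o c t x = x + ((1 - t) * b.coord o x) • (c - b o) := rfl

lemma flatten_apply_apex (b : AffineBasis κ ℝ E) (o : κ) (c : E) (t : ℝ) :
    flatten b o c t (b o) = c + t • (b o - c) := by
  rw [flatten_apply, b.coord_apply_eq]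
  module

lemma flatten_eq_self (b : AffineBasis κ ℝ E) {o : κ} {x : E} (hx : b.coord o x = 0) (c : E)
    (t : ℝ) : flatten b o c t x = x := by
  rw [flatten_apply, hx, mul_zero, zero_smul, add_zero]

lemma continuous_flatten_param (b : AffineBasis κ ℝ E) (o : κ) (c x : E) :
    Continuous fun t ↦ flatten b o c t x := by
  simp only [flatten_apply]
  fun_prop

lemma coord_flatten_apex (b : AffineBasis κ ℝ E) {o : κ} {c : E} (hc : b.coord o c = 0) (t : ℝ)
    (x : E) : b.coord o (flatten b o c t x) = t * b.coord o x := by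
  rw [flatten, map_affineTransvection, coord_linear_sub, hc, b.coord_apply_eq,
    AffineMap.coe_smul, Pi.smul_apply, smul_eq_mul]
  ring

lemma coord_flatten_of_ne (b : AffineBasis κ ℝ E) {o i : κ} (hi : i ≠ o) (c : E) (t : ℝ) (x : E) :
    b.coord i (flatten b o c t x) = b.coord i x + (1 - t) * b.coord o x * b.coord i c := by
  rw [flatten, map_affineTransvection, coord_linear_sub, b.coord_apply_ne hi, sub_zero,
    AffineMap.coe_smul, Pi.smul_apply, smul_eq_mul]

lemma norm_le_of_norm_flatten_le (b : AffineBasis κ ℝ E) {o : κ} {c x : E} {t R C : ℝ}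
    (hc : b.coord o c = 0) (ht₀ : t ≠ 0) (ht₁ : |t| ≤ 1) (hR : ‖flatten b o c t x‖ ≤ R)
    (hC : |b.coord o (flatten b o c t x)| ≤ C * |t|) :
    ‖x‖ ≤ R + 2 * C * ‖c - b o‖ := by
  have hheight : |b.coord o x| ≤ C := by
    rw [coord_flatten_apex b hc, abs_mul, mul_comm C] at hC
    exact le_of_mul_le_mul_left hC (abs_pos.2 ht₀)
  have hfactor : |(1 - t) * b.coord o x| ≤ 2 * C := by
    rw [abs_mul]
    have h2 : |1 - t| ≤ 2 := by rw [abs_le] at ht₁ ⊢; constructor <;> linarith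
    gcongr
  calc ‖x‖ = ‖flatten b o c t x - ((1 - t) * b.coord o x) • (c - b o)‖ := by
        rw [flatten_apply, add_sub_cancel_right]
    _ ≤ ‖flatten b o c t x‖ + |(1 - t) * b.coord o x| * ‖c - b o‖ := by
        rw [← Real.norm_eq_abs, ← norm_smul]
        exact norm_sub_le _ _
    _ ≤ R + 2 * C * ‖c - b o‖ := by gcongr

variable [MeasurableSpace E] [BorelSpace E] [FiniteDimensional ℝ E] (μ : Measure E)

/-- The integral of `f` over the projection of the simplex `b` along `b o - c` onto its facet
opposite to `b o`, up to a constant factor the integral of `f` over this facet against the tent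
function with peak at `c`. It is the boundary term in the derivative of integrals over a body having
this facet when a part of the facet near `c` is moved. -/
def tentIntegral (b : AffineBasis κ ℝ E) (o : κ) (c : E) (f : E → ℝ) : ℝ :=
  ∫ x in convexHull ℝ (Set.range b), f (flatten b o c 0 x) ∂μ

variable [μ.IsAddHaarMeasure]

lemma setIntegral_preimage_flatten (b : AffineBasis κ ℝ E) {o : κ} {c : E} (hc : b.coord o c = 0)
    {t : ℝ} (ht : t ≠ 0) {A : Set E} (hA : MeasurableSet A) {f : E → ℝ} (hf : Continuous f) :
    ∫ x in flatten b o c t ⁻¹' A, f (flatten b o c t x) ∂μ = |t|⁻¹ * ∫ x in A, f x ∂μ := by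
  have hdet : (flatten b o c t).linear.det = t := by
    rw [flatten, det_linear_affineTransvection, AffineMap.smul_linear, LinearMap.smul_apply,
      coord_linear_sub, hc, b.coord_apply_eq, smul_eq_mul]
    ring
  rw [setIntegral_preimage_affineMap μ (by rwa [hdet]) hA hf.aestronglyMeasurable, hdet,
    smul_eq_mul]

lemma tendsto_indicator_apply_of_eventually_mem_iff {α β M : Type*} [Zero M] [TopologicalSpace M]
    {l : Filter α} {s : α → Set β} {S : Set β} {g : α → β → M} {G : β → M} {x : β}
    (hmem : ∀ᶠ a in l, x ∈ s a ↔ x ∈ S) (hg : Tendsto (fun a ↦ g a x) l (𝓝 (G x))) :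
    Tendsto (fun a ↦ (s a).indicator (g a) x) l (𝓝 (S.indicator G x)) := by
  by_cases hx : x ∈ S
  · rw [Set.indicator_of_mem hx]
    exact hg.congr' (hmem.mono fun a ha ↦ (Set.indicator_of_mem (ha.2 hx) _).symm)
  · rw [Set.indicator_of_notMem hx]
    exact tendsto_const_nhds.congr'
      (hmem.mono fun a ha ↦ (Set.indicator_of_notMem (mt ha.1 hx) _).symm)

/-- Rescaling the heights by `τ` turns the integrals over the sets `A a`, of thickness `O(τ)` along
the facet opposite to `b o`, into integrals that converge by dominated convergence. -/
theorem tendsto_inv_mul_setIntegral_tentIntegral [Finite κ] (b : AffineBasis κ ℝ E) {o : κ} {c : E}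
    (hc : b.coord o c = 0) {α : Type*} {l : Filter α} [l.IsCountablyGenerated] {τ : α → ℝ}
    (hτ : Tendsto τ l (𝓝[≠] 0)) {A : α → Set E} (hmeas : ∀ a, MeasurableSet (A a)) {R C : ℝ}
    (hbdd : ∀ᶠ a in l, ∀ y ∈ A a, ‖y‖ ≤ R)
    (hslab : ∀ᶠ a in l, ∀ y ∈ A a, |b.coord o y| ≤ C * |τ a|)
    (hlim : ∀ᵐ x ∂μ, ∀ᶠ a in l,
      (flatten b o c (τ a) x ∈ A a ↔ x ∈ convexHull ℝ (Set.range b)))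
    {f : E → ℝ} (hf : Continuous f) :
    Tendsto (fun a ↦ |τ a|⁻¹ * ∫ x in A a, f x ∂μ) l (𝓝 (tentIntegral μ b o c f)) := by
  have hτ₀ : ∀ᶠ a in l, τ a ≠ 0 := hτ.eventually self_mem_nhdsWithin
  have hτ' : Tendsto τ l (𝓝 0) := hτ.mono_right nhdsWithin_le_nhds
  have hτ₁ : ∀ᶠ a in l, |τ a| ≤ 1 := by
    have habs : Tendsto (fun a ↦ |τ a|) l (𝓝 0) := by simpa using hτ'.abs
    exact habs.eventually_le_const one_pos
  obtain ⟨M, hM⟩ := (isCompact_closedBall (0 : E) R).exists_bound_of_continuousOn hf.continuousOn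
  have hpre : ∀ a, MeasurableSet (flatten b o c (τ a) ⁻¹' A a) := fun a ↦
    (flatten b o c (τ a)).continuous_of_finiteDimensional.measurable (hmeas a)
  have hrescale : (fun a ↦ ∫ x, (flatten b o c (τ a) ⁻¹' A a).indicator
      (fun x ↦ f (flatten b o c (τ a) x)) x ∂μ) =ᶠ[l] fun a ↦ |τ a|⁻¹ * ∫ x in A a, f x ∂μ := by
    filter_upwards [hτ₀] with a ha
    rw [integral_indicator (hpre a), setIntegral_preimage_flatten μ b hc ha (hmeas a) hf]
  rw [tentIntegral, ← integral_indicator (isCompact_convexHull_range b).measurableSet]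
  refine Tendsto.congr' hrescale (tendsto_integral_filter_of_dominated_convergence
    ((Metric.closedBall (0 : E) (R + 2 * C * ‖c - b o‖)).indicator fun _ ↦ |M|)
    (.of_forall fun a ↦ ((hf.comp (flatten b o c
      (τ a)).continuous_of_finiteDimensional).aestronglyMeasurable.indicator (hpre a))) ?_
    ((integrable_indicator_iff measurableSet_closedBall).2
      (integrableOn_const (isCompact_closedBall _ _).measure_ne_top)) ?_)
  · filter_upwards [hτ₀, hτ₁, hbdd, hslab] with a h₀ h₁ hR hC
    refine .of_forall fun x ↦ ?_
    rw [norm_indicator_eq_indicator_norm]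
    refine Set.indicator_apply_le' (fun hx ↦ ?_)
      fun _ ↦ Set.indicator_nonneg (fun _ _ ↦ abs_nonneg M) x
    rw [Set.indicator_of_mem (mem_closedBall_zero_iff.2
      (norm_le_of_norm_flatten_le b hc h₀ h₁ (hR _ hx) (hC _ hx)))]
    exact (hM _ (mem_closedBall_zero_iff.2 (hR _ hx))).trans (le_abs_self M)
  · filter_upwards [hlim] with x hx
    exact tendsto_indicator_apply_of_eventually_mem_iff hx <| (hf.tendsto _).comp <|
      ((continuous_flatten_param b o c x).tendsto 0).comp hτ'

end Flattening

section FacetSimplex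

open Filter Topology

variable {E κ : Type*} [NormedAddCommGroup E] [NormedSpace ℝ E]

/-- The simplex `b` lies in `P` and its facet opposite to `b o` is a facet of `P`, namely the set of
points of `P` of minimal height `b.coord o`. -/
structure IsFacetSimplex (P : Set E) (b : AffineBasis κ ℝ E) (o : κ) : Prop where
  convexHull_subset : convexHull ℝ (Set.range b) ⊆ P
  coord_nonneg : ∀ x ∈ P, 0 ≤ b.coord o x
  mem_convexHull : ∀ x ∈ P, b.coord o x = 0 → x ∈ convexHull ℝ (Set.range b)

lemma flatten_mem_convexHull (b : AffineBasis κ ℝ E) {o : κ} {c : E} (hc : b.coord o c = 0)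
    (hcmem : c ∈ convexHull ℝ (Set.range b)) {t : ℝ} (ht : t ∈ Set.Icc (0 : ℝ) 1) {x : E}
    (hx : x ∈ convexHull ℝ (Set.range b)) : flatten b o c t x ∈ convexHull ℝ (Set.range b) := by
  rw [mem_convexHull_range_iff_coord_nonneg] at hcmem hx ⊢
  intro i
  rcases eq_or_ne i o with rfl | hi
  · rw [coord_flatten_apex b hc]
    exact mul_nonneg ht.1 (hx i)
  · rw [coord_flatten_of_ne b hi]
    exact add_nonneg (hx i) (mul_nonneg (mul_nonneg (sub_nonneg.2 ht.2) (hx o)) (hcmem i))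

lemma flatten_zero_mem_of_frequently {P : Set E} (hP : IsClosed P) (b : AffineBasis κ ℝ E) {o : κ}
    {c x : E} (hfreq : ∃ᶠ t in 𝓝[>] 0, flatten b o c t x ∈ P) : flatten b o c 0 x ∈ P :=
  hP.mem_of_frequently_of_tendsto hfreq
    (((continuous_flatten_param b o c x).tendsto 0).mono_left nhdsWithin_le_nhds)

end FacetSimplex

section Cut

open Filter Topology

variable {E κ : Type*} [NormedAddCommGroup E] [NormedSpace ℝ E]
  {P : Set E} {b : AffineBasis κ ℝ E} {o k : κ}

/-- The part of `P` left after cutting off a neighbourhood of the vertex `b k` by a hyperplane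
through the other vertices of the facet opposite to `b o`, with slope proportional to `t`. -/
def cut (P : Set E) (b : AffineBasis κ ℝ E) (o k : κ) (t : ℝ) : Set E :=
  P ∩ {x | t * (b.coord o x + b.coord k x) ≤ b.coord o x}

lemma cut_zero (h : IsFacetSimplex P b o) (k : κ) : cut P b o k 0 = P :=
  Set.inter_eq_left.2 fun x hx ↦ by simpa using h.coord_nonneg x hx

lemma convex_cut (hP : Convex ℝ P) (b : AffineBasis κ ℝ E) (o k : κ) (t : ℝ) :
    Convex ℝ (cut P b o k t) := by
  convert! hP.inter ((convex_Iic (0 : ℝ)).affine_preimage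
    (t • (b.coord o + b.coord k) - b.coord o)) using 1
  ext x
  simp [cut, mul_add]

lemma flatten_mem_diff_cut_iff (hk : k ≠ o) {t : ℝ} (ht : 0 < t) (x : E) :
    flatten b o (b k) t x ∈ P \ cut P b o k t
      ↔ flatten b o (b k) t x ∈ P ∧ 0 < b.coord k x := by
  have hcoord : b.coord o (b k) = 0 := b.coord_apply_ne hk.symm
  simp only [cut, Set.sdiff_self_inter, Set.mem_sdiff, Set.mem_ofPred_eq, not_le,
    coord_flatten_apex b hcoord, coord_flatten_of_ne b hk, b.coord_apply_eq,
    mul_lt_mul_iff_right₀ ht]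
  refine and_congr_right fun _ ↦ ⟨fun h ↦ ?_, fun h ↦ ?_⟩ <;> linarith

lemma lineMap_apex_mem_cut (h : IsFacetSimplex P b o) (hconv : Convex ℝ P) {C : ℝ} (hC₁ : 1 ≤ C)
    (hC : ∀ x ∈ P, b.coord o x + b.coord k x ≤ C) {t : ℝ} (ht : 0 ≤ t) (hCt : C * t ≤ 1)
    {x : E} (hx : x ∈ P) : AffineMap.lineMap x (b o) (C * t) ∈ cut P b o k t := by
  have hapex : b o ∈ P := h.convexHull_subset (subset_convexHull ℝ _ ⟨o, rfl⟩)
  have hs : 0 ≤ C * t := mul_nonneg (zero_le_one.trans hC₁) ht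
  have hy : AffineMap.lineMap x (b o) (C * t) ∈ P := hconv.lineMap_mem hx hapex ⟨hs, hCt⟩
  refine ⟨hy, ?_⟩
  calc t * (b.coord o (AffineMap.lineMap x (b o) (C * t))
        + b.coord k (AffineMap.lineMap x (b o) (C * t)))
      ≤ t * C := mul_le_mul_of_nonneg_left (hC _ hy) ht
    _ ≤ (1 - C * t) * b.coord o x + C * t := by
        nlinarith [mul_nonneg (sub_nonneg.2 hCt) (h.coord_nonneg x hx)]
    _ = b.coord o (AffineMap.lineMap x (b o) (C * t)) := by
        rw [AffineMap.apply_lineMap, AffineMap.lineMap_apply_module, b.coord_apply_eq]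
        simp

lemma eventually_flatten_mem_diff_cut_iff (h : IsFacetSimplex P b o) (hP : IsClosed P) (hk : k ≠ o)
    {x : E} (hx : b.coord k x ≠ 0) :
    ∀ᶠ t in 𝓝[>] 0, (flatten b o (b k) t x ∈ P \ cut P b o k t
      ↔ x ∈ convexHull ℝ (Set.range b)) := by
  have hcoord : b.coord o (b k) = 0 := b.coord_apply_ne hk.symm
  by_cases hmem : x ∈ convexHull ℝ (Set.range b)
  · have hk_pos : 0 < b.coord k x :=
      ((mem_convexHull_range_iff_coord_nonneg b).1 hmem k).lt_of_ne' hx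
    filter_upwards [Ioc_mem_nhdsGT one_pos] with t ht
    simp only [flatten_mem_diff_cut_iff hk ht.1, hmem, hk_pos, and_true, iff_true]
    exact h.convexHull_subset <| flatten_mem_convexHull b hcoord
      (subset_convexHull ℝ _ ⟨k, rfl⟩) ⟨ht.1.le, ht.2⟩ hmem
  · simp only [hmem, iff_false]
    by_contra hfreq
    simp only [not_eventually, not_not] at hfreq
    have hfreq' := (hfreq.and_eventually self_mem_nhdsWithin).mono fun t ht ↦
      And.intro ht.2 ((flatten_mem_diff_cut_iff hk ht.2 x).1 ht.1)
    obtain ⟨t, ht₀, htP, hk_pos⟩ := hfreq'.exists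
    have ho_nonneg : 0 ≤ b.coord o x := by
      have hheight := h.coord_nonneg _ htP
      rw [coord_flatten_apex b hcoord] at hheight
      exact nonneg_of_mul_nonneg_right hheight ht₀
    have hflat := (mem_convexHull_range_iff_coord_nonneg b).1 <| h.mem_convexHull _
      (flatten_zero_mem_of_frequently hP b (hfreq'.mono fun _ ht ↦ ht.2.1))
      (by rw [coord_flatten_apex b hcoord, zero_mul])
    refine hmem ((mem_convexHull_range_iff_coord_nonneg b).2 fun i ↦ ?_)
    rcases eq_or_ne i o with rfl | hio
    · exact ho_nonneg
    rcases eq_or_ne i k with rfl | hik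
    · exact hk_pos.le
    · simpa [coord_flatten_of_ne b hio, b.coord_apply_ne hik] using hflat i

variable [FiniteDimensional ℝ E]

lemma isCompact_cut (hP : IsCompact P) (b : AffineBasis κ ℝ E) (o k : κ) (t : ℝ) :
    IsCompact (cut P b o k t) := by
  have ho := continuous_barycentric_coord b o
  have hk := continuous_barycentric_coord b k
  exact hP.inter_right (isClosed_le (by fun_prop) ho)

lemma interior_cut_nonempty (hapex : b o ∈ interior P) (hk : k ≠ o) {t : ℝ} (ht : t < 1) :
    (interior (cut P b o k t)).Nonempty := by
  have ho := continuous_barycentric_coord b o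
  have hk' := continuous_barycentric_coord b k
  have hstrict : t * (b.coord o (b o) + b.coord k (b o)) < b.coord o (b o) := by
    simpa [b.coord_apply_ne hk] using ht
  have hnhds : ∀ᶠ x in 𝓝 (b o), t * (b.coord o x + b.coord k x) < b.coord o x :=
    ContinuousAt.eventually_lt (by fun_prop) ho.continuousAt hstrict
  exact ⟨b o, mem_interior_iff_mem_nhds.2 <|
    inter_mem (mem_interior_iff_mem_nhds.1 hapex) (hnhds.mono fun _ ↦ le_of_lt)⟩

lemma exists_coord_add_coord_le (hP : IsCompact P) (b : AffineBasis κ ℝ E) (o k : κ) :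
    ∃ C, 1 ≤ C ∧ ∀ x ∈ P, b.coord o x + b.coord k x ≤ C := by
  have ho := continuous_barycentric_coord b o
  have hk := continuous_barycentric_coord b k
  obtain ⟨C, hC⟩ := hP.exists_bound_of_continuousOn (f := fun x ↦ b.coord o x + b.coord k x)
    (by fun_prop)
  exact ⟨max 1 C, le_max_left _ _,
    fun x hx ↦ (le_abs_self _).trans ((hC x hx).trans (le_max_right _ _))⟩

lemma tendsto_hausdorffDist_cut (h : IsFacetSimplex P b o) (hP : IsCompact P) (hconv : Convex ℝ P)
    (k : κ) : Tendsto (fun t ↦ Metric.hausdorffDist (cut P b o k t) P) (𝓝[>] 0) (𝓝 0) := by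
  obtain ⟨C, hC₁, hC⟩ := exists_coord_add_coord_le hP b o k
  obtain ⟨R, hR⟩ := hP.isBounded.subset_closedBall (b o)
  have hR₀ : 0 ≤ R := dist_nonneg.trans <|
    hR (h.convexHull_subset (subset_convexHull ℝ _ ⟨o, rfl⟩))
  have hlim : Tendsto (fun t : ℝ ↦ C * t) (𝓝[>] 0) (𝓝 0) := by
    simpa using ((continuous_const_mul C).tendsto 0).mono_left nhdsWithin_le_nhds
  have hbound : ∀ᶠ t in 𝓝[>] 0, Metric.hausdorffDist (cut P b o k t) P ≤ C * t * R := by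
    filter_upwards [hlim.eventually_le_const one_pos, self_mem_nhdsWithin] with t hCt ht
    have hs : 0 ≤ C * t := mul_nonneg (zero_le_one.trans hC₁) (le_of_lt ht)
    refine Metric.hausdorffDist_le_of_mem_dist (mul_nonneg hs hR₀)
      (fun x hx ↦ ⟨x, hx.1, by simpa using mul_nonneg hs hR₀⟩) fun x hx ↦
      ⟨_, lineMap_apex_mem_cut h hconv hC₁ hC (le_of_lt ht) hCt hx, ?_⟩
    rw [dist_comm, dist_lineMap_left, Real.norm_of_nonneg hs]
    exact mul_le_mul_of_nonneg_left (hR hx) hs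
  exact squeeze_zero' (.of_forall fun _ ↦ Metric.hausdorffDist_nonneg) hbound
    (by simpa using hlim.mul_const R)

variable [Finite κ] [MeasurableSpace E] [BorelSpace E] (μ : Measure E) [μ.IsAddHaarMeasure]

lemma hasDerivWithinAt_setIntegral_cut (h : IsFacetSimplex P b o) (hP : IsCompact P) (hk : k ≠ o)
    {f : E → ℝ} (hf : Continuous f) :
    HasDerivWithinAt (fun t ↦ ∫ x in cut P b o k t, f x ∂μ) (-tentIntegral μ b o (b k) f)
      (Set.Ioi 0) 0 := by
  obtain ⟨C, -, hC⟩ := exists_coord_add_coord_le hP b o k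
  obtain ⟨R, hR⟩ := hP.isBounded.exists_norm_le
  have hlim := tendsto_inv_mul_setIntegral_tentIntegral μ b (c := b k) (b.coord_apply_ne hk.symm)
    (l := 𝓝[>] 0) (τ := id) (tendsto_id.mono_left (nhdsWithin_mono _ fun t ht ↦ ne_of_gt ht))
    (A := fun t ↦ P \ cut P b o k t) (R := R) (C := C)
    (fun t ↦ hP.measurableSet.diff (isCompact_cut hP b o k t).measurableSet)
    (.of_forall fun t y hy ↦ hR y hy.1) ?_ ?_ hf
  · rw [hasDerivWithinAt_iff_tendsto_slope' (by simp)]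
    refine hlim.neg.congr' ?_
    filter_upwards [self_mem_nhdsWithin] with t ht
    rw [slope_def_field, cut_zero h, setIntegral_sdiff (isCompact_cut hP b o k t).measurableSet
      (hf.continuousOn.integrableOn_compact hP) Set.inter_subset_left, id, abs_of_pos ht]
    ring
  · filter_upwards [self_mem_nhdsWithin] with t ht y hy
    have hlow : b.coord o y < t * (b.coord o y + b.coord k y) := not_le.1 fun hle ↦ hy.2 ⟨hy.1, hle⟩
    rw [id, abs_of_nonneg (h.coord_nonneg y hy.1), abs_of_pos ht, mul_comm]
    exact hlow.le.trans (mul_le_mul_of_nonneg_left (hC y hy.1) (le_of_lt ht))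
  · have hnull : μ {x | b.coord k x = 0} = 0 :=
      addHaar_setOf_affineMap_eq_zero μ (x := b k) (by simp)
    filter_upwards [measure_eq_zero_iff_ae_notMem.1 hnull] with x hx
    exact eventually_flatten_mem_diff_cut_iff h hP.isClosed hk hx

end Cut

section Raise

open Filter Topology

variable {E κ : Type*} [NormedAddCommGroup E] [NormedSpace ℝ E]
  {P : Set E} {b : AffineBasis κ ℝ E} {o : κ} {c : E}

/-- The relative interior of the facet of the simplex `b` opposite to `b o`. -/
def facetInterior (b : AffineBasis κ ℝ E) (o : κ) : Set E :=
  {c | b.coord o c = 0 ∧ ∀ i ≠ o, 0 < b.coord i c}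

/-- The convex hull of `P` and the point at height `-t`, in terms of `b.coord o`, on the line
through `b o` and `c`. -/
def raise (P : Set E) (b : AffineBasis κ ℝ E) (o : κ) (c : E) (t : ℝ) : Set E :=
  convexHull ℝ (insert (flatten b o c (-t) (b o)) P)

lemma subset_raise (P : Set E) (b : AffineBasis κ ℝ E) (o : κ) (c : E) (t : ℝ) :
    P ⊆ raise P b o c t :=
  (Set.subset_insert _ P).trans (subset_convexHull ℝ _)

lemma mem_of_mem_facetInterior (h : IsFacetSimplex P b o) (hc : c ∈ facetInterior b o) : c ∈ P := by
  refine h.convexHull_subset ((mem_convexHull_range_iff_coord_nonneg b).2 fun i ↦ ?_)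
  rcases eq_or_ne i o with rfl | hi
  · exact hc.1.ge
  · exact (hc.2 i hi).le

lemma raise_zero (hconv : Convex ℝ P) (hc : c ∈ P) (b : AffineBasis κ ℝ E) (o : κ) :
    raise P b o c 0 = P := by
  rw [raise, neg_zero, flatten_apply_apex, zero_smul, add_zero, Set.insert_eq_of_mem hc,
    hconv.convexHull_eq]

lemma raise_eq_image_lineMap (hconv : Convex ℝ P) (hne : P.Nonempty) (b : AffineBasis κ ℝ E)
    (o : κ) (c : E) (t : ℝ) :
    raise P b o c t = (fun qs : E × ℝ ↦ AffineMap.lineMap qs.1 (flatten b o c (-t) (b o)) qs.2) ''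
      (P ×ˢ Set.Icc 0 1) := by
  ext y
  simp [raise, convexHull_insert hne, hconv.convexHull_eq, convexJoin_singleton_left,
    segment_symm ℝ (flatten b o c (-t) (b o)), segment_eq_image_lineMap, and_assoc]

lemma isCompact_raise (hP : IsCompact P) (hconv : Convex ℝ P) (hne : P.Nonempty)
    (b : AffineBasis κ ℝ E) (o : κ) (c : E) (t : ℝ) : IsCompact (raise P b o c t) := by
  rw [raise_eq_image_lineMap hconv hne]
  refine (hP.prod isCompact_Icc).image ?_
  simp only [AffineMap.lineMap_apply_module]
  fun_prop

lemma tendsto_hausdorffDist_raise (hconv : Convex ℝ P) (hc : c ∈ P) (b : AffineBasis κ ℝ E)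
    (o : κ) : Tendsto (fun t ↦ Metric.hausdorffDist (raise P b o c t) P) (𝓝[>] 0) (𝓝 0) := by
  have hbound : ∀ᶠ t in 𝓝[>] 0, Metric.hausdorffDist (raise P b o c t) P ≤ t * ‖b o - c‖ := by
    filter_upwards [self_mem_nhdsWithin] with t ht
    have hr : 0 ≤ t * ‖b o - c‖ := mul_nonneg (le_of_lt ht) (norm_nonneg _)
    refine Metric.hausdorffDist_le_of_mem_dist hr ?_
      fun x hx ↦ ⟨x, subset_raise P b o c t hx, by simpa using hr⟩
    rw [raise_eq_image_lineMap hconv ⟨c, hc⟩]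
    rintro _ ⟨⟨q, s⟩, ⟨hq, hs⟩, rfl⟩
    refine ⟨AffineMap.lineMap q c s, hconv.lineMap_mem hq hc hs, ?_⟩
    have hdiff : AffineMap.lineMap q (flatten b o c (-t) (b o)) s - AffineMap.lineMap q c s
        = -(s * t) • (b o - c) := by
      simp only [flatten_apply_apex, AffineMap.lineMap_apply_module]
      module
    rw [dist_eq_norm, hdiff, norm_smul, norm_neg,
      Real.norm_of_nonneg (mul_nonneg hs.1 (le_of_lt ht))]
    gcongr
    exact mul_le_of_le_one_left (le_of_lt ht) hs.2
  have hlim : Tendsto (fun t : ℝ ↦ t * ‖b o - c‖) (𝓝[>] 0) (𝓝 0) := by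
    simpa using ((continuous_mul_const ‖b o - c‖).tendsto 0).mono_left nhdsWithin_le_nhds
  exact squeeze_zero' (.of_forall fun _ ↦ Metric.hausdorffDist_nonneg) hbound hlim

lemma flatten_neg_mem_raise (h : IsFacetSimplex P b o) (t : ℝ) {x : E}
    (hx : x ∈ convexHull ℝ (Set.range b)) : flatten b o c (-t) x ∈ raise P b o c t := by
  have hvertices : Set.range b ⊆ flatten b o c (-t) ⁻¹' raise P b o c t := by
    rintro _ ⟨i, rfl⟩
    rcases eq_or_ne i o with rfl | hi
    · exact subset_convexHull ℝ _ (Set.mem_insert _ P)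
    · rw [Set.mem_preimage, flatten_eq_self b (b.coord_apply_ne hi.symm)]
      exact subset_raise P b o c t (h.convexHull_subset (subset_convexHull ℝ _ ⟨i, rfl⟩))
  exact convexHull_min hvertices ((convex_convexHull ℝ _).affine_preimage _) hx

lemma coord_apex_lineMap_raised (hc : b.coord o c = 0) (q : E) (s t : ℝ) :
    b.coord o (AffineMap.lineMap q (flatten b o c (-t) (b o)) s)
      = (1 - s) * b.coord o q - s * t := by
  rw [AffineMap.apply_lineMap, coord_flatten_apex b hc, b.coord_apply_eq,
    AffineMap.lineMap_apply_module]
  simp only [smul_eq_mul]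
  ring

lemma coord_lineMap_raised {i : κ} (hi : i ≠ o) (q : E) (s t : ℝ) :
    b.coord i (AffineMap.lineMap q (flatten b o c (-t) (b o)) s)
      = (1 - s) * b.coord i q + s * ((1 + t) * b.coord i c) := by
  rw [AffineMap.apply_lineMap, coord_flatten_of_ne b hi, b.coord_apply_eq, b.coord_apply_ne hi,
    AffineMap.lineMap_apply_module]
  simp only [smul_eq_mul]
  ring

/-- The segment from `q` to the raised point meets the hyperplane of the facet inside the facet when
`q` is high enough, so that all of its points above this hyperplane lie in `P`. -/
lemma lineMap_raised_mem (h : IsFacetSimplex P b o) (hconv : Convex ℝ P)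
    (hc : c ∈ facetInterior b o) {C t s : ℝ} (hC₀ : 0 < C) (ht : 0 < t) {q : E} (hq : q ∈ P)
    (hC : ∀ i ≠ o, -b.coord i q ≤ C * b.coord i c) (hhigh : C * t ≤ b.coord o q) (hs : 0 ≤ s)
    (habove : 0 ≤ b.coord o (AffineMap.lineMap q (flatten b o c (-t) (b o)) s)) :
    AffineMap.lineMap q (flatten b o c (-t) (b o)) s ∈ P := by
  have hm : 0 < b.coord o q := (mul_pos hC₀ ht).trans_le hhigh
  set m := b.coord o q
  have hmt : 0 < m + t := by positivity
  have hcross : AffineMap.lineMap q (flatten b o c (-t) (b o)) (m / (m + t)) ∈ P := by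
    refine h.convexHull_subset ((mem_convexHull_range_iff_coord_nonneg b).2 fun i ↦ ?_)
    rcases eq_or_ne i o with rfl | hi
    · rw [coord_apex_lineMap_raised hc.1]
      refine le_of_eq ?_
      field_simp
      ring
    · have hnum : 0 ≤ t * b.coord i q + m * ((1 + t) * b.coord i c) := by
        have hci := hc.2 i hi
        nlinarith [mul_le_mul_of_nonneg_left (hC i hi) ht.le,
          mul_le_mul_of_nonneg_right hhigh hci.le, mul_pos hm (mul_pos ht hci)]
      rw [coord_lineMap_raised hi]
      convert! div_nonneg hnum hmt.le using 1
      field_simp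
      ring
  have hs_le : s ≤ m / (m + t) := by
    rw [coord_apex_lineMap_raised hc.1] at habove
    rw [le_div_iff₀ hmt]
    linarith
  have hseg := (hconv.affine_preimage
    (AffineMap.lineMap q (flatten b o c (-t) (b o)) : ℝ →ᵃ[ℝ] E)).ordConnected
  exact hseg.out (by simpa using hq) hcross ⟨hs, hs_le⟩

lemma abs_coord_le_of_mem_raise_diff (h : IsFacetSimplex P b o) (hconv : Convex ℝ P)
    (hc : c ∈ facetInterior b o) {C t : ℝ} (hC₁ : 1 ≤ C) (ht : 0 < t)
    (hC : ∀ q ∈ P, ∀ i ≠ o, -b.coord i q ≤ C * b.coord i c) {y : E}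
    (hy : y ∈ raise P b o c t \ P) : |b.coord o y| ≤ C * t := by
  rw [raise_eq_image_lineMap hconv ⟨c, mem_of_mem_facetInterior h hc⟩] at hy
  obtain ⟨⟨⟨q, s⟩, ⟨hq, hs⟩, rfl⟩, hnot⟩ := hy
  have hm := h.coord_nonneg q hq
  have htC : t ≤ C * t := le_mul_of_one_le_left ht.le hC₁
  have hst : s * t ≤ t := mul_le_of_le_one_left ht.le hs.2
  have hlow : -(C * t) ≤ (1 - s) * b.coord o q - s * t := by
    linarith [mul_nonneg (sub_nonneg.2 hs.2) hm]
  refine abs_le.2 ⟨by rwa [coord_apex_lineMap_raised hc.1], ?_⟩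
  by_contra! hgt
  refine hnot (lineMap_raised_mem h hconv hc (one_pos.trans_le hC₁) ht hq (hC q hq) ?_ hs.1
    ((mul_nonneg (zero_le_one.trans hC₁) ht.le).trans hgt.le))
  rw [coord_apex_lineMap_raised hc.1] at hgt
  linarith [mul_nonneg hs.1 hm, mul_nonneg hs.1 ht.le]

/-- A limit argument in the compact space of all representations of points as
`AffineMap.lineMap q (flatten b o c (-t) (b o)) s`. -/
lemma exists_mul_coord_le_of_frequently_mem_raise (h : IsFacetSimplex P b o) (hP : IsCompact P)
    (hconv : Convex ℝ P) (hc : b.coord o c = 0) (hcP : c ∈ P) {x : E}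
    (hfreq : ∃ᶠ t in 𝓝[>] 0, flatten b o c (-t) x ∈ raise P b o c t) :
    ∃ s, 0 ≤ s ∧ b.coord o x ≤ s ∧ ∀ i ≠ o, s * b.coord i c ≤ b.coord i (flatten b o c 0 x) := by
  let Z : Set (ℝ × E × ℝ) := (Set.Icc 0 1 ×ˢ P ×ˢ Set.Icc 0 1) ∩ {z | b.coord o x ≤ z.2.2 ∧
    flatten b o c (-z.1) x = AffineMap.lineMap z.2.1 (flatten b o c (-z.1) (b o)) z.2.2}
  have hZ : IsCompact Z := by
    refine (isCompact_Icc.prod (hP.prod isCompact_Icc)).inter_right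
      (IsClosed.and (isClosed_le (by fun_prop) (by fun_prop)) (isClosed_eq ?_ ?_))
    · exact (continuous_flatten_param b o c x).comp (by fun_prop)
    · simp only [flatten_apply_apex, AffineMap.lineMap_apply_module]
      fun_prop
  have hfst : ∃ᶠ t in 𝓝[>] 0, t ∈ Prod.fst '' Z := by
    refine (hfreq.and_eventually (Ioc_mem_nhdsGT one_pos)).mono fun t ⟨hmem, ht⟩ ↦ ?_
    rw [raise_eq_image_lineMap hconv ⟨c, hcP⟩] at hmem
    obtain ⟨⟨q, s⟩, ⟨hq, hs⟩, heq⟩ := hmem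
    refine ⟨(t, q, s), ⟨⟨⟨ht.1.le, ht.2⟩, hq, hs⟩, ?_, heq.symm⟩, rfl⟩
    have hheight := congrArg (b.coord o) heq
    rw [coord_flatten_apex b hc] at hheight
    simp only [coord_apex_lineMap_raised hc] at hheight
    have := mul_nonneg (sub_nonneg.2 hs.2) (h.coord_nonneg q hq)
    exact le_of_mul_le_mul_left (by linarith) ht.1
  obtain ⟨⟨t, q, s⟩, ⟨⟨-, hq, hs⟩, hle, heq⟩, ht⟩ :=
    (hZ.image continuous_fst).isClosed.mem_of_frequently_of_tendsto hfst
      (tendsto_id.mono_left nhdsWithin_le_nhds)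
  obtain rfl : t = 0 := ht
  simp only [neg_zero] at heq hq hs hle
  rw [← neg_zero] at heq
  refine ⟨s, hs.1, hle, fun i hi ↦ ?_⟩
  have hheight := congrArg (b.coord o) heq
  rw [coord_flatten_apex b hc, coord_apex_lineMap_raised hc] at hheight
  have hq_nonneg : 0 ≤ (1 - s) * b.coord i q := by
    rcases mul_eq_zero.1 (show (1 - s) * b.coord o q = 0 by linarith) with hs₁ | hq₀
    · rw [hs₁, zero_mul]
    · exact mul_nonneg (sub_nonneg.2 hs.2)
        ((mem_convexHull_range_iff_coord_nonneg b).1 (h.mem_convexHull q hq hq₀) i)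
  rw [← neg_zero, heq, coord_lineMap_raised hi]
  linarith

lemma eventually_flatten_mem_convexHull [Finite κ] (hc : b.coord o c = 0) {x : E}
    (ho : b.coord o x < 0) (hpos : ∀ i ≠ o, 0 < b.coord i (flatten b o c 0 x)) :
    ∀ᶠ t in 𝓝[>] 0, flatten b o c (-t) x ∈ convexHull ℝ (Set.range b) := by
  simp only [mem_convexHull_range_iff_coord_nonneg]
  refine Filter.eventually_all.2 fun i ↦ ?_
  rcases eq_or_ne i o with rfl | hi
  · filter_upwards [self_mem_nhdsWithin] with t ht
    rw [coord_flatten_apex b hc]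
    exact mul_nonneg_of_nonpos_of_nonpos (neg_nonpos.2 (le_of_lt ht)) ho.le
  · have hcont : Continuous fun t : ℝ ↦ b.coord i (flatten b o c (-t) x) := by
      simp only [coord_flatten_of_ne b hi]
      fun_prop
    exact ((hcont.tendsto 0).mono_left nhdsWithin_le_nhds).eventually_const_le
      (by simpa using hpos i hi)

lemma eventually_flatten_mem_raise_diff_iff [Finite κ] (h : IsFacetSimplex P b o)
    (hP : IsCompact P) (hconv : Convex ℝ P) (hc : c ∈ facetInterior b o) {x : E}
    (hx : b.coord o x ≠ 0) (hflat : ∀ i ≠ o, b.coord i (flatten b o c 0 x) ≠ 0) :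
    ∀ᶠ t in 𝓝[>] 0, (flatten b o c (-t) x ∈ raise P b o c t \ P
      ↔ x ∈ convexHull ℝ (Set.range b)) := by
  by_cases hmem : x ∈ convexHull ℝ (Set.range b)
  · have ho_pos : 0 < b.coord o x :=
      ((mem_convexHull_range_iff_coord_nonneg b).1 hmem o).lt_of_ne' hx
    filter_upwards [self_mem_nhdsWithin] with t ht
    refine iff_of_true ⟨flatten_neg_mem_raise h t hmem, fun hP' ↦ ?_⟩ hmem
    have hheight := h.coord_nonneg _ hP'
    rw [coord_flatten_apex b hc.1] at hheight
    exact hheight.not_gt (mul_neg_of_neg_of_pos (neg_neg_of_pos ht) ho_pos)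
  · simp only [hmem, iff_false]
    by_contra hfreq
    simp only [not_eventually, not_not] at hfreq
    obtain ⟨s, hs, hle, hcoord⟩ := exists_mul_coord_le_of_frequently_mem_raise h hP hconv hc.1
      (mem_of_mem_facetInterior h hc) (hfreq.mono fun _ ht ↦ ht.1)
    have hne_nonneg : ∀ i ≠ o, 0 ≤ b.coord i x := fun i hi ↦ by
      have hi_le := hcoord i hi
      rw [coord_flatten_of_ne b hi] at hi_le
      linarith [mul_le_mul_of_nonneg_right hle (hc.2 i hi).le]
    have ho_neg : b.coord o x < 0 := by
      by_contra! ho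
      refine hmem ((mem_convexHull_range_iff_coord_nonneg b).2 fun i ↦ ?_)
      rcases eq_or_ne i o with rfl | hi
      exacts [ho, hne_nonneg i hi]
    have hpos : ∀ i ≠ o, 0 < b.coord i (flatten b o c 0 x) := fun i hi ↦
      ((mul_nonneg hs (hc.2 i hi).le).trans (hcoord i hi)).lt_of_ne' (hflat i hi)
    obtain ⟨t, ht, ht'⟩ :=
      (hfreq.and_eventually (eventually_flatten_mem_convexHull hc.1 ho_neg hpos)).exists
    exact ht.2 (h.convexHull_subset ht')

lemma exists_norm_le_of_mem_raise (hP : IsCompact P) (hconv : Convex ℝ P) (hne : P.Nonempty)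
    (b : AffineBasis κ ℝ E) (o : κ) (c : E) :
    ∃ R, ∀ t ∈ Set.Icc (0 : ℝ) 1, ∀ y ∈ raise P b o c t, ‖y‖ ≤ R := by
  obtain ⟨R, hR⟩ := ((hP.prod isCompact_Icc).prod
    (isCompact_Icc (a := (0 : ℝ)) (b := 1))).exists_bound_of_continuousOn
    (f := fun z : (E × ℝ) × ℝ ↦
      AffineMap.lineMap z.1.1 (flatten b o c (-z.2) (b o)) z.1.2) (by
      simp only [flatten_apply_apex, AffineMap.lineMap_apply_module]
      fun_prop)
  refine ⟨R, fun t ht y hy ↦ ?_⟩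
  rw [raise_eq_image_lineMap hconv hne] at hy
  obtain ⟨qs, hqs, rfl⟩ := hy
  exact hR (qs, t) ⟨hqs, ht⟩

variable [FiniteDimensional ℝ E]

lemma exists_neg_coord_le_mul [Finite κ] (hP : IsCompact P) (hc : c ∈ facetInterior b o) :
    ∃ C, 1 ≤ C ∧ ∀ q ∈ P, ∀ i ≠ o, -b.coord i q ≤ C * b.coord i c := by
  have hi : ∀ i, ∀ᶠ C in atTop, i ≠ o → ∀ q ∈ P, -b.coord i q ≤ C * b.coord i c := fun i ↦ by
    obtain ⟨M, hM⟩ :=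
      hP.exists_bound_of_continuousOn (continuous_barycentric_coord b i).continuousOn
    rcases eq_or_ne i o with hi | hi
    · exact .of_forall fun _ hne ↦ absurd hi hne
    · filter_upwards [(tendsto_id.atTop_mul_const (hc.2 i hi)).eventually_ge_atTop M]
        with C hC _ q hq
      exact (neg_le_abs _).trans ((hM q hq).trans hC)
  obtain ⟨C, hC, hC₁⟩ := ((Filter.eventually_all.2 hi).and (eventually_ge_atTop 1)).exists
  exact ⟨C, hC₁, fun q hq i hne ↦ hC i hne q hq⟩

variable [Finite κ] [MeasurableSpace E] [BorelSpace E] (μ : Measure E) [μ.IsAddHaarMeasure]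

lemma ae_coord_flatten_zero_ne_zero (hc : c ∈ facetInterior b o) :
    ∀ᵐ x ∂μ, b.coord o x ≠ 0 ∧ ∀ i ≠ o, b.coord i (flatten b o c 0 x) ≠ 0 := by
  refine (measure_eq_zero_iff_ae_notMem.1
    (addHaar_setOf_affineMap_eq_zero μ (φ := b.coord o) (x := b o) (by simp))).and
    (ae_all_iff.2 fun i ↦ ?_)
  rcases eq_or_ne i o with hi | hi
  · exact .of_forall fun _ hne ↦ absurd hi hne
  · filter_upwards [measure_eq_zero_iff_ae_notMem.1 (addHaar_setOf_affineMap_eq_zero μ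
      (φ := (b.coord i).comp (flatten b o c 0)) (x := c) (by
        simpa [flatten_eq_self b hc.1] using (hc.2 i hi).ne'))] with x hx _ using hx

lemma hasDerivWithinAt_setIntegral_raise (h : IsFacetSimplex P b o) (hP : IsCompact P)
    (hconv : Convex ℝ P) (hc : c ∈ facetInterior b o) {f : E → ℝ} (hf : Continuous f) :
    HasDerivWithinAt (fun t ↦ ∫ x in raise P b o c t, f x ∂μ) (tentIntegral μ b o c f)
      (Set.Ioi 0) 0 := by
  have hcP := mem_of_mem_facetInterior h hc
  obtain ⟨C, hC₁, hC⟩ := exists_neg_coord_le_mul hP hc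
  obtain ⟨R, hR⟩ := exists_norm_le_of_mem_raise hP hconv ⟨c, hcP⟩ b o c
  have hraise : ∀ t, IsCompact (raise P b o c t) := isCompact_raise hP hconv ⟨c, hcP⟩ b o c
  have hτ : Tendsto (fun t : ℝ ↦ -t) (𝓝[>] 0) (𝓝[≠] 0) := by
    simpa only [neg_zero] using (tendsto_neg_nhdsGT (a := (0 : ℝ))).mono_right
      (nhdsLT_le_nhdsNE _)
  have hlim := tendsto_inv_mul_setIntegral_tentIntegral μ b hc.1 hτ
    (A := fun t ↦ raise P b o c t \ P) (R := R) (C := C)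
    (fun t ↦ (hraise t).measurableSet.diff hP.measurableSet) ?_ ?_ ?_ hf
  · rw [hasDerivWithinAt_iff_tendsto_slope' (by simp)]
    refine hlim.congr' ?_
    filter_upwards [self_mem_nhdsWithin] with t ht
    rw [slope_def_field, raise_zero hconv hcP, setIntegral_sdiff hP.measurableSet
      (hf.continuousOn.integrableOn_compact (hraise t)) (subset_raise P b o c t), abs_neg,
      abs_of_pos (Set.mem_Ioi.1 ht)]
    ring
  · filter_upwards [Ioc_mem_nhdsGT one_pos] with t ht y hy using hR t ⟨ht.1.le, ht.2⟩ y hy.1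
  · filter_upwards [self_mem_nhdsWithin] with t ht y hy
    rw [abs_neg, abs_of_pos (Set.mem_Ioi.1 ht)]
    exact abs_coord_le_of_mem_raise_diff h hconv hc hC₁ ht hC hy
  · filter_upwards [ae_coord_flatten_zero_ne_zero μ hc] with x hx
    exact eventually_flatten_mem_raise_diff_iff h hP hconv hc hx.1 hx.2

end Raise

section Determinant

variable {n : Type*} [Fintype n] [DecidableEq n]

lemma det_one_updateRow {R : Type*} [CommRing R] (i : n) (v : n → R) :
    ((1 : Matrix n n R).updateRow i v).det = v i := by
  have hrow : v = ∑ k, v k • (1 : Matrix n n R) k := by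
    ext j
    simp [Matrix.one_apply]
  conv_lhs => rw [hrow, Matrix.det_updateRow_sum, Matrix.det_one]
  simp

lemma hasDerivWithinAt_det {𝕜 : Type*} [NontriviallyNormedField 𝕜] {A : 𝕜 → Matrix n n 𝕜}
    {A' : Matrix n n 𝕜} {s : Set 𝕜} {t : 𝕜}
    (hA : ∀ i j, HasDerivWithinAt (fun r ↦ A r i j) (A' i j) s t) :
    HasDerivWithinAt (fun r ↦ (A r).det) (∑ i, ((A t).updateRow i (A' i)).det) s t := by
  let f : ContinuousMultilinearMap 𝕜 (fun _ : n ↦ n → 𝕜) 𝕜 :=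
    ⟨Matrix.detRowAlternating.toMultilinearMap, Continuous.matrix_det continuous_id⟩
  have hrow : ∀ i, HasDerivWithinAt (fun r ↦ A r i) (A' i) s t := fun i ↦
    hasDerivWithinAt_pi.2 (hA i)
  have hderiv := (HasFDerivWithinAt.multilinear_comp (f := f)
    fun i ↦ (hrow i).hasFDerivWithinAt).hasDerivWithinAt
  refine hderiv.congr_deriv ?_
  simp only [FunLike.coe_sum, Finset.sum_apply, ContinuousLinearMap.comp_apply,
    ContinuousLinearMap.toSpanSingleton_apply, one_smul,
    ContinuousMultilinearMap.toContinuousLinearMap_apply]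
  rfl

lemma hasDerivWithinAt_det_of_eq_one {𝕜 : Type*} [NontriviallyNormedField 𝕜]
    {A : 𝕜 → Matrix n n 𝕜} {A' : Matrix n n 𝕜} {s : Set 𝕜} {t : 𝕜} (hA₁ : A t = 1)
    (hA : ∀ i j, HasDerivWithinAt (fun r ↦ A r i j) (A' i j) s t) :
    HasDerivWithinAt (fun r ↦ (A r).det) A'.trace s t := by
  simpa only [hA₁, det_one_updateRow] using! hasDerivWithinAt_det hA

end Determinant

section FirstVariation

open Filter Topology

variable {d : ℕ}

lemma volume_real_pos {K : Set (Euc d)} (hK : IsConvexBody K) : 0 < volume.real K :=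
  ENNReal.toReal_pos (Measure.measure_pos_of_nonempty_interior _ hK.2.2).ne'
    hK.1.measure_lt_top.ne

lemma centroid_apply {K : Set (Euc d)} (hK : IsCompact K) (i : Fin d) :
    _root_.centroid K i = (volume.real K)⁻¹ * ∫ x in K, x i := by
  have hint : IntegrableOn (fun x : Euc d ↦ x) K :=
    continuous_id.continuousOn.integrableOn_compact hK
  rw [_root_.centroid, PiLp.smul_apply, smul_eq_mul]
  congr 1
  exact ((EuclideanSpace.proj i : Euc d →L[ℝ] ℝ).integral_comp_comm hint).symm

lemma covMatrix_apply {K : Set (Euc d)} (hK : IsCompact K) (hV : volume.real K ≠ 0) (i j : Fin d) :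
    covMatrix K i j = (volume.real K)⁻¹ * (∫ x in K, x i * x j) -
      ((volume.real K)⁻¹ * ∫ x in K, x i) * ((volume.real K)⁻¹ * ∫ x in K, x j) := by
  have hint : ∀ f : Euc d → ℝ, Continuous f → IntegrableOn f K := fun f hf ↦
    hf.continuousOn.integrableOn_compact hK
  have hexpand : ∀ a c : ℝ, ∫ x in K, (x i - a) * (x j - c) =
      (∫ x in K, x i * x j) - c * (∫ x in K, x i) - a * (∫ x in K, x j)
        + volume.real K * (a * c) := fun a c ↦ by
    have hpoly : ∀ x : Euc d, (x i - a) * (x j - c) = x i * x j - c * x i - a * x j + a * c :=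
      fun x ↦ by ring
    simp_rw [hpoly]
    rw [integral_add, integral_sub, integral_sub, integral_const_mul, integral_const_mul,
      setIntegral_const, smul_eq_mul]
    all_goals exact hint _ (by fun_prop)
  change (volume.real K)⁻¹ * ∫ x in K, (x i - _root_.centroid K i) * (x j - _root_.centroid K j) = _
  rw [hexpand, centroid_apply hK, centroid_apply hK]
  field_simp
  ring

/-- A one-sided deformation `K` of the convex body `P`: for small `t > 0` the sets `K t` are convex
bodies, which tend to `P` in the Hausdorff metric, and `D f` is the derivative at `0` of the
integral of `f` over `K t`. -/
structure IsDeformation (P : Set (Euc d)) (K : ℝ → Set (Euc d)) (D : (Euc d → ℝ) → ℝ) : Prop where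
  zero_eq : K 0 = P
  eventually_isConvexBody : ∀ᶠ t in 𝓝[>] 0, IsConvexBody (K t)
  tendsto_hausdorffDist : Tendsto (fun t ↦ Metric.hausdorffDist (K t) P) (𝓝[>] 0) (𝓝 0)
  hasDerivWithinAt_setIntegral : ∀ f : Euc d → ℝ, Continuous f →
    HasDerivWithinAt (fun t ↦ ∫ x in K t, f x) (D f) (Set.Ioi 0) 0

/-- The first variation of the isotropic constant at an isotropic body, up to a positive factor,
under a deformation whose first variation of integrals is `D`. -/
def isoVariation (D : (Euc d → ℝ) → ℝ) : ℝ :=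
  D (fun x ↦ ‖x‖ ^ 2) - (d + 2) * D fun _ ↦ 1

namespace IsDeformation

variable {P : Set (Euc d)} {K : ℝ → Set (Euc d)} {D : (Euc d → ℝ) → ℝ}

lemma hasDerivWithinAt_volume (h : IsDeformation P K D) :
    HasDerivWithinAt (fun t ↦ volume.real (K t)) (D fun _ ↦ 1) (Set.Ioi 0) 0 := by
  simpa using h.hasDerivWithinAt_setIntegral (fun _ ↦ 1) continuous_const

lemma hasDerivWithinAt_covMatrix (h : IsDeformation P K D) (hP : IsConvexBody P)
    (hiso : IsIsotropic P) (i j : Fin d) :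
    HasDerivWithinAt (fun t ↦ covMatrix (K t) i j)
      ((volume.real P)⁻¹ * (D (fun x ↦ x i * x j) - (1 : Matrix _ _ ℝ) i j * D fun _ ↦ 1))
      (Set.Ioi 0) 0 := by
  have hV := (volume_real_pos hP).ne'
  have hfirst : ∀ i, ∫ x in P, x i = 0 := fun i ↦ by
    simpa [hiso.1, hV] using centroid_apply hP.1 i
  have hsecond : ∀ i j, ∫ x in P, x i * x j = volume.real P * (1 : Matrix _ _ ℝ) i j :=
    fun i j ↦ by
      have hcov := covMatrix_apply hP.1 hV i j
      rw [hiso.2, hfirst] at hcov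
      rw [hcov]
      field_simp
      ring
  have hinv := h.hasDerivWithinAt_volume.fun_inv (by rwa [h.zero_eq])
  have hmean := fun i : Fin d ↦ hinv.fun_mul (h.hasDerivWithinAt_setIntegral (fun x ↦ x i)
    (by fun_prop))
  have hderiv := (hinv.fun_mul (h.hasDerivWithinAt_setIntegral (fun x ↦ x i * x j)
    (by fun_prop))).fun_sub ((hmean i).fun_mul (hmean j))
  refine (hderiv.congr_of_eventuallyEq ?_ ?_).congr_deriv ?_
  · filter_upwards [h.eventually_isConvexBody] with t ht
    exact covMatrix_apply ht.1 (volume_real_pos ht).ne' i j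
  · rw [h.zero_eq]
    exact covMatrix_apply hP.1 hV i j
  · simp only [h.zero_eq, hfirst, hsecond]
    field_simp
    ring

lemma sum_apply_coord_mul_self (h : IsDeformation P K D) (hP : IsCompact P) :
    ∑ i, D (fun x ↦ x i * x i) = D fun x ↦ ‖x‖ ^ 2 := by
  have hsum := HasDerivWithinAt.fun_sum (u := univ) fun i (_ : i ∈ univ) ↦
    h.hasDerivWithinAt_setIntegral (fun x ↦ x i * x i) (by fun_prop)
  have hswap : ∀ S : Set (Euc d), IsCompact S →
      ∑ i, ∫ x in S, x i * x i = ∫ x in S, ‖x‖ ^ 2 := fun S hS ↦ by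
    simp_rw [EuclideanSpace.norm_sq_eq, Real.norm_eq_abs, sq_abs, pow_two]
    exact (integral_finsetSum _ fun i _ ↦
      (Continuous.continuousOn (by fun_prop)).integrableOn_compact hS).symm
  refine (uniqueDiffWithinAt_Ioi 0).eq_deriv _ hsum
    ((h.hasDerivWithinAt_setIntegral _ (by fun_prop)).congr_of_eventuallyEq ?_ ?_)
  · filter_upwards [h.eventually_isConvexBody] with t ht using hswap _ ht.1
  · rw [h.zero_eq, hswap P hP]

lemma hasDerivWithinAt_isoConst (h : IsDeformation P K D) (hP : IsConvexBody P)
    (hiso : IsIsotropic P) :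
    HasDerivWithinAt (fun t ↦ isoConst (K t))
      (isoConst P * isoVariation D / (2 * d * volume.real P)) (Set.Ioi 0) 0 := by
  have hV := (volume_real_pos hP).ne'
  have hdet := hasDerivWithinAt_det_of_eq_one (A := fun t ↦ covMatrix (K t))
    (A' := Matrix.of fun i j ↦ (volume.real P)⁻¹ *
      (D (fun x ↦ x i * x j) - (1 : Matrix _ _ ℝ) i j * D fun _ ↦ 1))
    (by rw [h.zero_eq, hiso.2]) (h.hasDerivWithinAt_covMatrix hP hiso)
  have htrace : (Matrix.of fun i j ↦ (volume.real P)⁻¹ *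
      (D (fun x ↦ x i * x j) - (1 : Matrix (Fin d) (Fin d) ℝ) i j * D fun _ ↦ 1)).trace
        = (volume.real P)⁻¹ * (D (fun x ↦ ‖x‖ ^ 2) - d * D fun _ ↦ 1) := by
    simp [Matrix.trace, ← Finset.mul_sum, h.sum_apply_coord_mul_self hP.1]
  have hratio₀ : (covMatrix (K 0)).det / volume.real (K 0) ^ 2 = (volume.real P ^ 2)⁻¹ := by
    rw [h.zero_eq, hiso.2, Matrix.det_one, one_div]
  have hratio := hdet.fun_div (h.hasDerivWithinAt_volume.fun_pow 2)
    (by rw [h.zero_eq]; exact pow_ne_zero 2 hV)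
  have hne : (volume.real P ^ 2)⁻¹ ≠ 0 := inv_ne_zero (pow_ne_zero 2 hV)
  refine (hratio.rpow_const (p := (2 * (d : ℝ))⁻¹) (.inl (by rwa [hratio₀]))).congr_deriv ?_
  have hL : isoConst P = ((volume.real P ^ 2)⁻¹) ^ (2 * (d : ℝ))⁻¹ := by
    rw [← hratio₀, h.zero_eq]
    rfl
  rw [hratio₀, Real.rpow_sub_one hne, ← hL, h.zero_eq, hiso.2, Matrix.det_one, htrace,
    isoVariation]
  field_simp
  ring

end IsDeformation

lemma isoConst_pos {P : Set (Euc d)} (hP : IsConvexBody P) (hiso : IsIsotropic P) :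
    0 < isoConst P := by
  have hV := volume_real_pos hP
  rw [isoConst, hiso.2, Matrix.det_one]
  exact Real.rpow_pos_of_pos (div_pos one_pos (pow_pos hV 2)) _

lemma nonpos_of_hasDerivWithinAt_of_eventually_le {φ : ℝ → ℝ} {φ' a : ℝ}
    (hφ : HasDerivWithinAt φ φ' (Set.Ioi a) a) (hle : ∀ᶠ t in 𝓝[>] a, φ t ≤ φ a) : φ' ≤ 0 := by
  refine le_of_tendsto ((hasDerivWithinAt_iff_tendsto_slope' (by simp)).1 hφ) ?_
  filter_upwards [hle, self_mem_nhdsWithin] with t ht hat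
  rw [slope_def_field]
  exact div_nonpos_of_nonpos_of_nonneg (sub_nonpos.2 ht) (sub_nonneg.2 (le_of_lt hat))

lemma isoVariation_mul_isoVariation_nonneg (hd : d ≠ 0) {P : Set (Euc d)} (hP : IsConvexBody P)
    (hiso : IsIsotropic P) (hext : IsLocalExtremumOfIsoConst P) {K₁ K₂ : ℝ → Set (Euc d)}
    {D₁ D₂ : (Euc d → ℝ) → ℝ} (h₁ : IsDeformation P K₁ D₁) (h₂ : IsDeformation P K₂ D₂) :
    0 ≤ isoVariation D₁ * isoVariation D₂ := by
  have hfactor : 0 < 2 * d * volume.real P := by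
    have := volume_real_pos hP
    positivity
  rcases hext with ⟨ε, hε, hmax⟩ | ⟨ε, hε, hmin⟩
  · have hnonpos : ∀ {K D}, IsDeformation P K D → isoVariation D ≤ 0 := fun {K D} h ↦ by
      have hle : ∀ᶠ t in 𝓝[>] 0, isoConst (K t) ≤ isoConst (K 0) := by
        filter_upwards [h.eventually_isConvexBody, h.tendsto_hausdorffDist.eventually_lt_const hε]
          with t ht hdist
        exact h.zero_eq ▸ hmax _ ht hdist
      have hderiv := nonpos_of_hasDerivWithinAt_of_eventually_le
        (h.hasDerivWithinAt_isoConst hP hiso) hle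
      rw [div_le_iff₀ hfactor, zero_mul] at hderiv
      exact nonpos_of_mul_nonpos_right hderiv (isoConst_pos hP hiso)
    exact mul_nonneg_of_nonpos_of_nonpos (hnonpos h₁) (hnonpos h₂)
  · have hnonneg : ∀ {K D}, IsDeformation P K D → 0 ≤ isoVariation D := fun {K D} h ↦ by
      have hle : ∀ᶠ t in 𝓝[>] 0, -isoConst (K t) ≤ -isoConst (K 0) := by
        filter_upwards [h.eventually_isConvexBody, h.tendsto_hausdorffDist.eventually_lt_const hε]
          with t ht hdist
        exact neg_le_neg (h.zero_eq ▸ hmin _ ht hdist)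
      have hderiv := nonpos_of_hasDerivWithinAt_of_eventually_le
        (h.hasDerivWithinAt_isoConst hP hiso).fun_neg hle
      rw [neg_nonpos, le_div_iff₀ hfactor, zero_mul] at hderiv
      exact nonneg_of_mul_nonneg_right hderiv (isoConst_pos hP hiso)
    exact mul_nonneg (hnonneg h₁) (hnonneg h₂)

end FirstVariation

section Equilibrium

open Filter Topology

section Normed

variable {E κ : Type*} [NormedAddCommGroup E] [NormedSpace ℝ E]

lemma mem_closure_facetInterior [Finite κ] (b : AffineBasis κ ℝ E) {o k : κ} (hk : k ≠ o) :
    b k ∈ closure (facetInterior b o) := by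
  classical
  have := Fintype.ofFinite κ
  set m := (univ.erase o).centroid ℝ b
  have hm : b.coord o m = 0 := b.coord_apply_combination_of_notMem (by simp)
    ((univ.erase o).sum_centroidWeights_eq_one_of_nonempty ℝ ⟨k, by simpa using hk⟩)
  have hsegment : ∀ s ∈ Set.Ioc (0 : ℝ) 1, AffineMap.lineMap (b k) m s ∈ facetInterior b o := by
    refine fun s hs ↦ ⟨?_, fun i hi ↦ ?_⟩
    · rw [AffineMap.apply_lineMap, b.coord_apply_ne hk.symm, hm, AffineMap.lineMap_same_apply]
    · rw [AffineMap.apply_lineMap, b.coord_apply_centroid (by simpa using hi),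
        AffineMap.lineMap_apply_module, b.coord_apply]
      have hcard : (0 : ℝ) < ((univ.erase o).card : ℝ)⁻¹ :=
        inv_pos.2 (Nat.cast_pos.2 (card_pos.2 ⟨k, by simpa using hk⟩))
      have hvertex : (0 : ℝ) ≤ if i = k then 1 else 0 := by split_ifs <;> norm_num
      exact add_pos_of_nonneg_of_pos (mul_nonneg (sub_nonneg.2 hs.2) hvertex)
        (mul_pos hs.1 hcard)
  have hlim : Tendsto (fun s : ℝ ↦ AffineMap.lineMap (b k) m s) (𝓝[>] 0) (𝓝 (b k)) := by
    have hcont : Continuous fun s : ℝ ↦ AffineMap.lineMap (b k) m s := by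
      simp only [AffineMap.lineMap_apply_module]
      fun_prop
    simpa using (hcont.tendsto 0).mono_left nhdsWithin_le_nhds
  refine mem_closure_of_tendsto hlim ?_
  filter_upwards [Ioc_mem_nhdsGT one_pos] using hsegment

lemma continuous_tentIntegral [Finite κ] [FiniteDimensional ℝ E] [MeasurableSpace E] [BorelSpace E]
    (μ : Measure E) [IsLocallyFiniteMeasure μ] (b : AffineBasis κ ℝ E) (o : κ) {f : E → ℝ}
    (hf : Continuous f) : Continuous fun c ↦ tentIntegral μ b o c f := by
  refine continuous_parametric_integral_of_continuous ?_ (isCompact_convexHull_range b)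
  have := continuous_barycentric_coord b o
  simp only [Function.uncurry_def, flatten_apply]
  fun_prop

lemma flatten_zero_eq_sum [Fintype κ] [DecidableEq κ] (b : AffineBasis κ ℝ E) (o : κ) (c x : E) :
    flatten b o c 0 x = ∑ i, b.coord i x • Function.update b o c i := by
  have hrest : ∑ i ∈ univ.erase o, b.coord i x • Function.update b o c i
      = ∑ i ∈ univ.erase o, b.coord i x • b i :=
    sum_congr rfl fun i hi ↦ by rw [Function.update_of_ne (ne_of_mem_erase hi)]
  have hx : b.coord o x • b o + ∑ i ∈ univ.erase o, b.coord i x • b i = x := by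
    rw [add_sum_erase univ (fun i ↦ b.coord i x • b i) (mem_univ o),
      b.linear_combination_coord_eq_self]
  rw [← add_sum_erase univ _ (mem_univ o), Function.update_self, hrest, flatten_apply,
    eq_sub_iff_add_eq'.2 hx]
  module

end Normed

lemma tentIntegral_norm_sq {H κ : Type*} [NormedAddCommGroup H] [InnerProductSpace ℝ H]
    [FiniteDimensional ℝ H] [MeasurableSpace H] [BorelSpace H] (μ : Measure H)
    [μ.IsAddHaarMeasure] [Fintype κ] [DecidableEq κ] (b : AffineBasis κ ℝ H) (o : κ) (c : H) :
    (Fintype.card κ : ℝ) * (Fintype.card κ + 1) * tentIntegral μ b o c (fun x ↦ ‖x‖ ^ 2) =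
      μ.real (convexHull ℝ (Set.range b)) *
        (‖∑ i, Function.update b o c i‖ ^ 2 + ∑ i, ‖Function.update b o c i‖ ^ 2) := by
  simp_rw [tentIntegral, flatten_zero_eq_sum]
  exact setIntegral_norm_sq_sum_coord_smul μ b _

variable {d : ℕ} {P : Set (Euc d)} {κ : Type*} {b : AffineBasis κ ℝ (Euc d)} {o k : κ}

lemma isDeformation_cut [Finite κ] (hP : IsConvexBody P) (h : IsFacetSimplex P b o)
    (hapex : b o ∈ interior P) (hk : k ≠ o) :
    IsDeformation P (cut P b o k) fun f ↦ -tentIntegral volume b o (b k) f where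
  zero_eq := cut_zero h k
  eventually_isConvexBody := by
    filter_upwards [Ioo_mem_nhdsGT one_pos] with t ht
    exact ⟨isCompact_cut hP.1 b o k t, convex_cut hP.2.1 b o k t,
      interior_cut_nonempty hapex hk ht.2⟩
  tendsto_hausdorffDist := tendsto_hausdorffDist_cut h hP.1 hP.2.1 k
  hasDerivWithinAt_setIntegral _ hf := hasDerivWithinAt_setIntegral_cut volume h hP.1 hk hf

lemma isDeformation_raise [Finite κ] (hP : IsConvexBody P) (h : IsFacetSimplex P b o) {c : Euc d}
    (hc : c ∈ facetInterior b o) :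
    IsDeformation P (raise P b o c) (tentIntegral volume b o c) where
  zero_eq := raise_zero hP.2.1 (mem_of_mem_facetInterior h hc) b o
  eventually_isConvexBody := .of_forall fun t ↦
    ⟨isCompact_raise hP.1 hP.2.1 (hP.2.2.mono interior_subset) b o c t, convex_convexHull ℝ _,
      hP.2.2.mono (interior_mono (subset_raise P b o c t))⟩
  tendsto_hausdorffDist := tendsto_hausdorffDist_raise hP.2.1 (mem_of_mem_facetInterior h hc) b o
  hasDerivWithinAt_setIntegral _ hf :=
    hasDerivWithinAt_setIntegral_raise volume h hP.1 hP.2.1 hc hf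

lemma isoVariation_neg (D : (Euc d → ℝ) → ℝ) : isoVariation (fun f ↦ -D f) = -isoVariation D := by
  simp only [isoVariation]
  ring

lemma continuous_isoVariation_tentIntegral [Finite κ] (b : AffineBasis κ ℝ (Euc d)) (o : κ) :
    Continuous fun c ↦ isoVariation (tentIntegral volume b o c) :=
  (continuous_tentIntegral volume b o (by fun_prop)).sub
    (continuous_const.mul (continuous_tentIntegral volume b o continuous_const))

/-- Cutting at the vertex `b k` and raising a point near `b k` have opposite first variations. -/
lemma isoVariation_tentIntegral_eq_zero [Finite κ] (hd : d ≠ 0) (hP : IsConvexBody P)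
    (hiso : IsIsotropic P) (hext : IsLocalExtremumOfIsoConst P) (h : IsFacetSimplex P b o)
    (hapex : b o ∈ interior P) (hk : k ≠ o) :
    isoVariation (tentIntegral volume b o (b k)) = 0 := by
  set I : Euc d → ℝ := fun c ↦ isoVariation (tentIntegral volume b o c)
  have hclosed : IsClosed {c | 0 ≤ -I (b k) * I c} :=
    isClosed_le continuous_const
      (continuous_const.mul (continuous_isoVariation_tentIntegral b o))
  have hinterior : facetInterior b o ⊆ {c | 0 ≤ -I (b k) * I c} := fun c hc ↦ by
    rw [Set.mem_ofPred_eq, ← isoVariation_neg]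
    exact isoVariation_mul_isoVariation_nonneg hd hP hiso hext
      (isDeformation_cut hP h hapex hk) (isDeformation_raise hP h hc)
  have hvertex : 0 ≤ -I (b k) * I (b k) :=
    closure_minimal hinterior hclosed (mem_closure_facetInterior b hk)
  rw [neg_mul, neg_nonneg] at hvertex
  exact mul_self_eq_zero.1 (hvertex.antisymm (mul_self_nonneg _))

lemma norm_sq_sum_update_eq [Fintype κ] [DecidableEq κ] (hd : d ≠ 0) (hP : IsConvexBody P)
    (hiso : IsIsotropic P) (hext : IsLocalExtremumOfIsoConst P) (h : IsFacetSimplex P b o)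
    (hapex : b o ∈ interior P) (hk : k ≠ o) :
    ‖∑ i, Function.update b o (b k) i‖ ^ 2 + ∑ i, ‖Function.update b o (b k) i‖ ^ 2
      = (d + 1) * (d + 2) ^ 2 := by
  have hV : volume.real (convexHull ℝ (Set.range b)) ≠ 0 :=
    (volume_real_pos ⟨isCompact_convexHull_range b, convex_convexHull ℝ _,
      ⟨_, b.centroid_mem_interior_convexHull⟩⟩).ne'
  have hcard : (Fintype.card κ : ℝ) = d + 1 := by
    simpa using congrArg (Nat.cast : ℕ → ℝ) b.card_eq_finrank_add_one
  have hvar := isoVariation_tentIntegral_eq_zero hd hP hiso hext h hapex hk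
  have hone : tentIntegral volume b o (b k) (fun _ ↦ 1)
      = volume.real (convexHull ℝ (Set.range b)) := by simp [tentIntegral]
  have hsq := tentIntegral_norm_sq volume b o (b k)
  rw [isoVariation, hone, sub_eq_zero] at hvar
  rw [hvar, hcard] at hsq
  refine mul_left_cancel₀ hV ?_
  linear_combination -hsq

end Equilibrium

section Gram

lemma sum_sum_add_sum_diag_eq_two_nsmul {ι M : Type*} [Fintype ι] [LinearOrder ι] [AddCommMonoid M]
    (s : ι → ι → M) (hs : ∀ i j, s i j = s j i) :
    ∑ i, ∑ j, s i j + ∑ i, s i i = 2 • ∑ i, ∑ j, if i ≤ j then s i j else 0 := by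
  have hsplit : ∀ i j, s i j + (if i = j then s i j else 0)
      = (if i ≤ j then s i j else 0) + if j ≤ i then s j i else 0 := fun i j ↦ by
    rw [hs j i]
    rcases lt_trichotomy i j with h | h | h
    · simp [h.le, h.ne, h.not_ge]
    · simp [h]
    · simp [h.le, h.ne', h.not_ge]
  have hdiag : ∑ i, s i i = ∑ i, ∑ j, if i = j then s i j else 0 := by simp
  rw [hdiag, two_nsmul]
  nth_rw 4 [sum_comm]
  simp_rw [← sum_add_distrib, hsplit]

lemma norm_sq_add_sum_eq_two_mul_sum {ι H : Type*} [Fintype ι] [LinearOrder ι]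
    [NormedAddCommGroup H] [InnerProductSpace ℝ H] (v : ι → H) (k : ι) :
    ‖v k + ∑ i, v i‖ ^ 2 + (‖v k‖ ^ 2 + ∑ i, ‖v i‖ ^ 2) =
      2 * ∑ i, ∑ j, if i ≤ j then
        (1 + (if i = k then (1 : ℝ) else 0) + (if j = k then (1 : ℝ) else 0)) * ⟪v i, v j⟫
      else 0 := by
  have hsymm := sum_sum_add_sum_diag_eq_two_nsmul
    (fun i j ↦ (1 + (if i = k then (1 : ℝ) else 0) + if j = k then 1 else 0) * ⟪v i, v j⟫)
    fun i j ↦ by rw [real_inner_comm]; ring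
  rw [nsmul_eq_mul, Nat.cast_ofNat] at hsymm
  rw [← hsymm]
  have hrow : ∑ j, ⟪v k, v j⟫ = ⟪v k, ∑ i, v i⟫ := (inner_sum _ _ _).symm
  have hcol : ∑ i, ⟪v i, v k⟫ = ⟪v k, ∑ i, v i⟫ := by rw [← sum_inner, real_inner_comm]
  have hgram : ∑ i, ∑ j, ⟪v i, v j⟫ = ‖∑ i, v i‖ ^ 2 := by
    simp_rw [← real_inner_self_eq_norm_sq, sum_inner, inner_sum]
  simp only [add_mul, one_mul, ite_mul, zero_mul, sum_add_distrib, sum_ite_eq', mem_univ, if_true,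
    sum_ite_irrel, sum_const_zero, real_inner_self_eq_norm_sq, hrow, hcol, hgram]
  rw [norm_add_sq_real]
  ring

end Gram

section FacetBasis

lemma affineIndependent_option_elim {𝕜 V A ι : Type*} [DivisionRing 𝕜] [AddCommGroup V]
    [Module 𝕜 V] [AddTorsor V A] {v : ι → A} (hv : AffineIndependent 𝕜 v) {o : A}
    (ho : o ∉ affineSpan 𝕜 (Set.range v)) :
    AffineIndependent 𝕜 fun i : Option ι ↦ i.elim o v := by
  let e : ι ≃ {i : Option ι // i ≠ none} := (Equiv.optionIsSomeEquiv ι).symm.trans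
    (Equiv.subtypeEquivRight fun _ ↦ Option.isSome_iff_ne_none)
  refine AffineIndependent.affineIndependent_of_notMem_span (i := none)
    ((affineIndependent_equiv e).1 hv) (mt (fun h ↦ affineSpan_mono 𝕜 ?_ h) ho)
  rintro _ ⟨_ | i, hi, rfl⟩
  exacts [absurd rfl hi, ⟨i, rfl⟩]

variable {E : Type*} [NormedAddCommGroup E] [NormedSpace ℝ E] {P : Set E}

lemma isFacetSimplex_of_isExposed {κ : Type*} [Nontrivial κ] (hconv : Convex ℝ P)
    (b : AffineBasis κ ℝ E) {o : κ} (ho : b o ∈ P)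
    (hF : IsExposed ℝ P (convexHull ℝ (b '' {o}ᶜ))) : IsFacetSimplex P b o := by
  set F := convexHull ℝ (b '' {o}ᶜ)
  have hvertex : ∀ {i}, i ≠ o → b i ∈ F := fun {i} hi ↦ subset_convexHull ℝ _ ⟨i, hi, rfl⟩
  have hoF : b o ∉ F := fun h ↦ b.ind.notMem_affineSpan_sdiff o Set.univ
    (Set.compl_eq_univ_sdiff {o} ▸ convexHull_subset_affineSpan _ h)
  obtain ⟨j, hj⟩ := exists_ne o
  obtain ⟨l, hl⟩ := hF ⟨_, hvertex hj⟩
  have hmax : ∀ {x}, x ∈ P → l x ≤ l (b j) := fun {x} ↦ (hl ▸ hvertex hj).2 x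
  have hface : ∀ {x}, x ∈ P → (x ∈ F ↔ l x = l (b j)) := fun {x} hx ↦ by
    rw [hl]
    exact ⟨fun h ↦ (hmax hx).antisymm (h.2 _ (hF.subset (hvertex hj))),
      fun h ↦ ⟨hx, fun y hy ↦ (hmax hy).trans_eq h.symm⟩⟩
  have hlt : 0 < l (b j) - l (b o) :=
    sub_pos.2 ((hmax ho).lt_of_ne (mt (hface ho).2 hoF))
  have hcoord : ∀ x, l (b j) - l x = (l (b j) - l (b o)) * b.coord o x := by
    have haffine : AffineMap.const ℝ E (l (b j)) - l.toLinearMap.toAffineMap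
        = (l (b j) - l (b o)) • b.coord o := by
      refine AffineMap.ext_on b.tot ?_
      rintro _ ⟨i, rfl⟩
      rcases eq_or_ne i o with rfl | hi
      · simp
      · simp [b.coord_apply_ne hi.symm, (hface (hF.subset (hvertex hi))).1 (hvertex hi)]
    exact fun x ↦ DFunLike.congr_fun haffine x
  refine ⟨convexHull_min ?_ hconv, fun x hx ↦ ?_, fun x hx hx₀ ↦ ?_⟩
  · rintro _ ⟨i, rfl⟩
    rcases eq_or_ne i o with rfl | hi
    exacts [ho, hF.subset (hvertex hi)]
  · exact nonneg_of_mul_nonneg_right (hcoord x ▸ sub_nonneg.2 (hmax hx)) hlt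
  · refine convexHull_mono (Set.image_subset_range _ _) ((hface hx).2 ?_)
    have := hcoord x
    rw [hx₀, mul_zero, sub_eq_zero] at this
    exact this.symm

lemma exists_affineBasis_isFacetSimplex [FiniteDimensional ℝ E] {ι : Type*} [Fintype ι] [Nonempty ι]
    (hconv : Convex ℝ P) (hint : (interior P).Nonempty) {v : ι → E} (hv : AffineIndependent ℝ v)
    (hcard : Fintype.card ι = Module.finrank ℝ E)
    (hF : IsExposed ℝ P (convexHull ℝ (Set.range v))) :
    ∃ b : AffineBasis (Option ι) ℝ E,
      (∀ i, b (some i) = v i) ∧ b none ∈ interior P ∧ IsFacetSimplex P b none := by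
  obtain ⟨o, ho, hoF⟩ : ∃ o ∈ interior P, o ∉ affineSpan ℝ (Set.range v) := by
    by_contra! hsub
    have htop : affineSpan ℝ (Set.range v) = ⊤ :=
      top_unique ((isOpen_interior.affineSpan_eq_top hint).ge.trans (affineSpan_le.2 hsub))
    have := hv.affineSpan_eq_top_iff_card_eq_finrank_add_one.1 htop
    omega
  have hind := affineIndependent_option_elim hv hoF
  let b : AffineBasis (Option ι) ℝ E := ⟨_, hind, by
    rw [hind.affineSpan_eq_top_iff_card_eq_finrank_add_one, Fintype.card_option, hcard]⟩
  have hfacet : b '' {none}ᶜ = Set.range v := by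
    rw [(Set.isCompl_range_some_none ι).symm.compl_eq, ← Set.range_comp]
    rfl
  exact ⟨b, fun _ ↦ rfl, ho,
    isFacetSimplex_of_isExposed hconv b (interior_subset ho) (by rwa [hfacet])⟩

end FacetBasis

theorem stmt8_general {d : ℕ} {P : Set (Euc d)} (hP : IsConvexBody P) (hiso : IsIsotropic P)
    (hext : IsLocalExtremumOfIsoConst P) {v : Fin d → Euc d} (hv : AffineIndependent ℝ v)
    (hF : IsExposed ℝ P (convexHull ℝ (Set.range v))) (k : Fin d) :
    ∑ i : Fin d, ∑ j : Fin d, (if i ≤ j then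
        (1 + (if i = k then (1:ℝ) else 0) + (if j = k then (1:ℝ) else 0)) * ⟪v i, v j⟫
      else 0)
      = (d + 1) * (d + 2) ^ 2 / 2 := by
  have : Nonempty (Fin d) := ⟨k⟩
  obtain ⟨b, hbv, hapex, hfacet⟩ :=
    exists_affineBasis_isFacetSimplex hP.2.1 hP.2.2 hv (by simp) hF
  have hequilibrium := norm_sq_sum_update_eq (Fin.pos k).ne' hP hiso hext hfacet hapex
    (Option.some_ne_none k)
  simp only [Fintype.sum_option, Function.update_self,
    Function.update_of_ne (Option.some_ne_none _), hbv, norm_sq_add_sum_eq_two_mul_sum]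
    at hequilibrium
  linarith

/-- First order necessary condition. Let `P` be a `d`-dimensional isotropic
simplicial polytope that is a local extremum of `K ↦ L_K`, and let `F` be a facet of `P` with
vertices `v 1, …, v d`. Then for every `k`,
`Σ_{i ≤ j} (1 + δ_{ik} + δ_{jk}) ⟪v i, v j⟫ = (d+1)(d+2)²/2`. -/
theorem stmt8 {d : ℕ} (P : Set (Euc d)) (hbody : IsConvexBody P)
    (hsimp : IsSimplicialPolytope d P) (hiso : IsIsotropic P)
    (hext : IsLocalExtremumOfIsoConst P)
    (F : Set (Euc d)) (hF : IsFacetOf d P F)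
    (v : Fin d → Euc d) (hvind : AffineIndependent ℝ v)
    (hFv : F = convexHull ℝ (Set.range v))
    (k : Fin d) :
    ∑ i : Fin d, ∑ j : Fin d, (if i ≤ j then
        (1 + (if i = k then (1:ℝ) else 0) + (if j = k then (1:ℝ) else 0)) * ⟪v i, v j⟫
      else 0)
      = (d + 1) * (d + 2) ^ 2 / 2 := by
  subst hFv
  exact stmt8_general hbody hiso hext hvind hF.1 k

end
end

section
/- Let d ≥ 3 and let P be a d-dimensional simplicial polytope of the form P = { (x, y) ∈ ℝ^{d−1} × ℝ : x ∈ S, −f(x) ≤ y ≤ f(x) }, where S ⊆ ℝ^{d−1} is a (d−1)-dimensional simplex with vertices v_1, …, v_d and f : S → ℝ is an affine function (nonnegative on S). Then P is a simplex; equivalently, f(v_i) ≠ 0 for exactly one index i ∈ {1, …, d}. -/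
open MeasureTheory Finset
open scoped ProbabilityTheory
open scoped RealInnerProductSpace

noncomputable section

/-!
Let `S` be the simplex and `x`, `y` two vertices of `S` over which `P` has positive height. The
four points of `P` at the top and the bottom above `x` and `y` are extreme points and form a
trapezoid, whose diagonals cross; but disjoint sets of vertices of a simplex have disjoint affine
spans. Since `d ≥ 3`, some facet `T` of `S` contains both `x` and `y`, and the part of `P` over
`T` is a facet of `P` with these extreme points, so it is not a simplex. Hence `P` has positive
height over at most one vertex of `S`, and over at least one because it is full-dimensional.
So the vertices of `P` are those of the graph of `f` over `S` and one further point off this graph.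
-/

section AffineIndependence

variable {ι E : Type*}

theorem exists_strongDual_apply_eq_of_linearIndependent [Finite ι] [AddCommGroup E] [Module ℝ E]
    [TopologicalSpace E] [SeparatingDual ℝ E] {u : ι → E} (hu : LinearIndependent ℝ u)
    (c : ι → ℝ) : ∃ l : StrongDual ℝ E, ∀ i, l (u i) = c i := by
  classical
  have := Fintype.ofFinite ι
  have hinj : Function.Injective (Fintype.linearCombination ℝ u) :=
    linearIndependent_iff_injective_fintypeLinearCombination.1 hu
  obtain ⟨l, hl⟩ :=
    SeparatingDual.dualMap_surjective_iff.2 hinj (Fintype.linearCombination ℝ c)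
  exact ⟨l, fun i ↦ by simpa using LinearMap.congr_fun hl (Pi.single i 1)⟩

theorem exists_strongDual_apply_eq_add_of_affineIndependent [Finite ι] [AddCommGroup E]
    [Module ℝ E] [TopologicalSpace E] [SeparatingDual ℝ E] {v : ι → E}
    (hv : AffineIndependent ℝ v) (c : ι → ℝ) :
    ∃ (l : StrongDual ℝ E) (a : ℝ), ∀ i, l (v i) = a + c i := by
  rcases isEmpty_or_nonempty ι with _ | ⟨⟨k⟩⟩
  · exact ⟨0, 0, isEmptyElim⟩
  obtain ⟨l, hl⟩ := exists_strongDual_apply_eq_of_linearIndependent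
    ((affineIndependent_iff_linearIndependent_vsub ℝ v k).1 hv) fun i ↦ c i - c k
  refine ⟨l, l (v k) - c k, fun i ↦ ?_⟩
  by_cases hik : i = k
  · simp [hik]
  · have hi := hl ⟨i, hik⟩
    rw [vsub_eq_sub, map_sub] at hi
    linarith

theorem isExposed_convexHull_union [AddCommGroup E] [Module ℝ E] [TopologicalSpace E] {s t : Set E}
    {l : StrongDual ℝ E} {a : ℝ} (hs : ∀ x ∈ s, l x = a) (ht : ∀ x ∈ t, l x < a) :
    IsExposed ℝ (convexHull ℝ (s ∪ t)) (convexHull ℝ s) := by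
  have hface : ∀ x ∈ convexHull ℝ s, l x = a := fun x hx ↦
    convexHull_min (t := {x | l x = a}) hs (convex_hyperplane l.toLinearMap.isLinear a) hx
  have hconvex : Convex ℝ (convexHull ℝ s ∪ {x | l x < a}) := by
    rw [convex_iff_openSegment_subset]
    rintro p hp q hq _ ⟨b, c, hb, hc, hbc, rfl⟩
    have hla : l (b • p + c • q) = a + b * (l p - a) + c * (l q - a) := by
      rw [map_add, map_smul, map_smul, smul_eq_mul, smul_eq_mul]
      linear_combination a * hbc
    rcases hp with hp | hp <;> rcases hq with hq | hq
    · exact Or.inl (convex_convexHull ℝ s hp hq hb.le hc.le hbc)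
    all_goals
      refine Or.inr (show l (b • p + c • q) < a from ?_)
      rw [hla]
    · nlinarith [hface p hp, mul_pos hc (sub_pos.2 hq)]
    · nlinarith [hface q hq, mul_pos hb (sub_pos.2 hp)]
    · nlinarith [mul_pos hb (sub_pos.2 hp), mul_pos hc (sub_pos.2 hq)]
  have hcover : convexHull ℝ (s ∪ t) ⊆ convexHull ℝ s ∪ {x | l x < a} :=
    convexHull_min (Set.union_subset_union (subset_convexHull ℝ s) ht) hconvex
  have hsub : convexHull ℝ s ⊆ convexHull ℝ (s ∪ t) := convexHull_mono Set.subset_union_left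
  rintro ⟨z, hz⟩
  refine ⟨l, Set.Subset.antisymm (fun x hx ↦ ⟨hsub hx, fun w hw ↦ ?_⟩) fun x ⟨hx, hmax⟩ ↦ ?_⟩
  · rw [hface x hx]
    exact (hcover hw).elim (fun h ↦ (hface w h).le) fun h : l w < a ↦ h.le
  · exact (hcover hx).resolve_right ((hface z hz).symm.trans_le (hmax z (hsub hz))).not_gt

theorem isExposed_convexHull_image [Finite ι] [AddCommGroup E] [Module ℝ E] [TopologicalSpace E]
    [SeparatingDual ℝ E] {v : ι → E} (hv : AffineIndependent ℝ v) (J : Set ι) :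
    IsExposed ℝ (convexHull ℝ (Set.range v)) (convexHull ℝ (v '' J)) := by
  obtain ⟨l, a, hl⟩ :=
    exists_strongDual_apply_eq_add_of_affineIndependent hv (Jᶜ.indicator fun _ ↦ -1)
  rw [← Set.image_univ, ← Set.union_compl_self J, Set.image_union]
  refine isExposed_convexHull_union (l := l) (a := a) ?_ ?_
  · rintro _ ⟨j, hj, rfl⟩
    simp [hl, hj]
  · rintro _ ⟨j, hj, rfl⟩
    rw [hl, Set.indicator_of_mem hj]
    linarith

theorem mem_extremePoints_convexHull_range [Finite ι] [AddCommGroup E] [Module ℝ E]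
    [TopologicalSpace E] [SeparatingDual ℝ E] {v : ι → E} (hv : AffineIndependent ℝ v) (i : ι) :
    v i ∈ (convexHull ℝ (Set.range v)).extremePoints ℝ := by
  have h := (isExposed_convexHull_image hv {i}).isExtreme
  rwa [Set.image_singleton, convexHull_singleton, isExtreme_singleton] at h

variable [Fintype ι] [NormedAddCommGroup E] [NormedSpace ℝ E] {v : ι → E}

theorem sdim_convexHull_range_add_one [Nonempty ι] (hv : AffineIndependent ℝ v) :
    sdim (convexHull ℝ (Set.range v)) + 1 = Fintype.card ι := by
  rw [sdim, affineSpan_convexHull, direction_affineSpan, hv.finrank_vectorSpan_add_one]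

theorem isSimplexWith_convexHull_insert (hv : AffineIndependent ℝ v) {p : E}
    (hp : p ∉ affineSpan ℝ (Set.range v)) :
    IsSimplexWith (Fintype.card ι + 1) (convexHull ℝ (insert p (Set.range v))) := by
  let e := (Fintype.equivFin ι).symm
  have hrange : Set.range (v ∘ e) = Set.range v := e.surjective.range_comp v
  refine ⟨Fin.cons p (v ∘ e), ?_, by rw [Fin.range_cons, hrange]⟩
  refine AffineIndependent.affineIndependent_of_notMem_span (i := 0) ?_ ?_
  · rw [← affineIndependent_equiv (finSuccAboveEquiv 0)]
    exact hv.comp_embedding e.toEmbedding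
  · have hne : {x : Fin (Fintype.card ι + 1) | x ≠ 0} = Set.range Fin.succ :=
      (Fin.range_succ _).symm
    rwa [hne, ← Set.range_comp, Fin.cons_comp_succ, hrange]

end AffineIndependence

/-- The points of `E × ℝ` over `s` between the graphs of `f` and `g`, both graphs included: the
closed counterpart of Mathlib's `regionBetween`. The polytope `P` is the region between `-f` and `f`
over the simplex `S`. -/
def closedRegionBetween {E : Type*} (f g : E → ℝ) (s : Set E) : Set (E × ℝ) :=
  {p | p.1 ∈ s ∧ f p.1 ≤ p.2 ∧ p.2 ≤ g p.1}

section Convexity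

variable {E : Type*} [AddCommGroup E] [Module ℝ E] {f g : E → ℝ} {s : Set E}

theorem convex_closedRegionBetween (hf : ConvexOn ℝ s f) (hg : ConcaveOn ℝ s g) :
    Convex ℝ (closedRegionBetween f g s) := by
  convert hf.convex_epigraph.inter hg.convex_hypograph using 1
  ext p
  exact and_and_left

theorem mk_mem_extremePoints_closedRegionBetween {x : E} {y : ℝ}
    (hx : x ∈ s.extremePoints ℝ) (hy : y ∈ (Set.Icc (f x) (g x)).extremePoints ℝ) :
    (x, y) ∈ (closedRegionBetween f g s).extremePoints ℝ := by
  refine mem_extremePoints_iff_left.2 ⟨⟨hx.1, hy.1⟩, ?_⟩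
  rintro ⟨p, u⟩ ⟨hp, hu⟩ ⟨q, w⟩ ⟨hq, hw⟩ ⟨b, c, hb, hc, hbc, h⟩
  obtain ⟨hpq, huw⟩ := Prod.mk.inj h
  obtain ⟨rfl, rfl⟩ := (mem_extremePoints.1 hx).2 p hp q hq ⟨b, c, hb, hc, hbc, hpq⟩
  exact Prod.ext rfl (hy.2 hu hw ⟨b, c, hb, hc, hbc, huw⟩)

theorem closedRegionBetween_convexHull {f g : E →ᵃ[ℝ] ℝ} (hfg : ∀ x ∈ s, f x ≤ g x) :
    closedRegionBetween f g (convexHull ℝ s) =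
      convexHull ℝ ((fun x ↦ (x, f x)) '' s ∪ (fun x ↦ (x, g x)) '' s) := by
  apply Set.Subset.antisymm
  · rintro ⟨x, y⟩ ⟨hx, hy⟩
    have hgraph (h : E →ᵃ[ℝ] ℝ) : (x, h x) ∈ convexHull ℝ ((fun x ↦ (x, h x)) '' s) := by
      have := Set.mem_image_of_mem ((AffineMap.id ℝ E).prod h) hx
      rwa [AffineMap.image_convexHull] at this
    have hseg : (x, y) ∈ segment ℝ (x, f x) (x, g x) := by
      rw [← Prod.image_mk_segment_right, segment_eq_Icc (hy.1.trans hy.2)]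
      exact ⟨y, hy, rfl⟩
    exact (convex_convexHull ℝ _).segment_subset (convexHull_mono Set.subset_union_left (hgraph f))
      (convexHull_mono Set.subset_union_right (hgraph g)) hseg
  · refine convexHull_min ?_ (convex_closedRegionBetween ?_ ?_)
    · rintro _ (⟨x, hx, rfl⟩ | ⟨x, hx, rfl⟩)
      exacts [⟨subset_convexHull ℝ s hx, le_rfl, hfg x hx⟩,
        ⟨subset_convexHull ℝ s hx, hfg x hx, le_rfl⟩]
    · exact ((convexOn_id convex_univ).comp_affineMap f).subset (Set.subset_univ _)
        (convex_convexHull ℝ s)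
    · exact ((concaveOn_id convex_univ).comp_affineMap g).subset (Set.subset_univ _)
        (convex_convexHull ℝ s)

theorem isExposed_closedRegionBetween [TopologicalSpace E] {t : Set E}
    (hfg : ∀ x ∈ s, f x ≤ g x) (ht : IsExposed ℝ s t) :
    IsExposed ℝ (closedRegionBetween f g s) (closedRegionBetween f g t) := by
  rintro ⟨q, hq, -⟩
  obtain ⟨l, rfl⟩ := ht ⟨q.1, hq⟩
  refine ⟨l.comp (ContinuousLinearMap.fst ℝ E ℝ), Set.ext fun p ↦ ⟨?_, ?_⟩⟩
  · rintro ⟨⟨hp, hmax⟩, hp'⟩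
    exact ⟨⟨hp, hp'⟩, fun w hw ↦ hmax w.1 hw.1⟩
  · rintro ⟨⟨hp, hp'⟩, hmax⟩
    exact ⟨⟨hp, fun w hw ↦ hmax (w, f w) ⟨hw, le_rfl, hfg w hw⟩⟩, hp'⟩

end Convexity

section Dimension

variable {E : Type*} [NormedAddCommGroup E] [NormedSpace ℝ E] {s : Set E}

theorem vectorSpan_closedRegionBetween {f g : E → ℝ} (hfg : ∀ x ∈ s, f x ≤ g x) {x : E}
    (hx : x ∈ s) (hlt : f x < g x) :
    vectorSpan ℝ (closedRegionBetween f g s) = (vectorSpan ℝ s).prod ⊤ := by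
  let W := vectorSpan ℝ (closedRegionBetween f g s)
  have hvert (c : ℝ) : ((0, c) : E × ℝ) ∈ W := by
    have hmem : (x, g x) -ᵥ (x, f x) ∈ W :=
      vsub_mem_vectorSpan ℝ ⟨hx, hlt.le, le_rfl⟩ ⟨hx, le_rfl, hlt.le⟩
    convert W.smul_mem (c / (g x - f x)) hmem using 1
    simp [div_mul_cancel₀ c (sub_pos.2 hlt).ne']
  apply le_antisymm
  · refine Submodule.span_le.2 ?_
    rintro _ ⟨p, hp, q, hq, rfl⟩
    exact ⟨vsub_mem_vectorSpan ℝ hp.1 hq.1, trivial⟩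
  · have hbase : vectorSpan ℝ s ≤ W.comap (LinearMap.inl ℝ E ℝ) := by
      refine Submodule.span_le.2 ?_
      rintro _ ⟨p, hp, q, hq, rfl⟩
      have hmem : (p, f p) -ᵥ (q, f q) ∈ W :=
        vsub_mem_vectorSpan ℝ ⟨hp, le_rfl, hfg p hp⟩ ⟨hq, le_rfl, hfg q hq⟩
      simpa using W.sub_mem hmem (hvert (f p - f q))
    rintro ⟨u, c⟩ ⟨hu, -⟩
    simpa using W.add_mem (hbase hu) (hvert c)

theorem sdim_closedRegionBetween {f g : E → ℝ} [FiniteDimensional ℝ (vectorSpan ℝ s)]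
    (hfg : ∀ x ∈ s, f x ≤ g x) {x : E} (hx : x ∈ s) (hlt : f x < g x) :
    sdim (closedRegionBetween f g s) = sdim s + 1 := by
  let φ := (vectorSpan ℝ s).subtype.prodMap (LinearMap.id : ℝ →ₗ[ℝ] ℝ)
  have hφ : φ.range = (vectorSpan ℝ s).prod ⊤ := by
    rw [LinearMap.range_prodMap, Submodule.range_subtype, LinearMap.range_id]
  have hinj : Function.Injective φ := (Submodule.injective_subtype _).prodMap Function.injective_id
  rw [sdim, sdim, direction_affineSpan, direction_affineSpan,
    vectorSpan_closedRegionBetween hfg hx hlt, ← hφ, LinearMap.finrank_range_of_inj hinj,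
    Module.finrank_prod, Module.finrank_self]

theorem sdim_closedRegionBetween_of_eqOn {f g : E →ᵃ[ℝ] ℝ} (hfg : Set.EqOn f g s) :
    sdim (closedRegionBetween f g s) = sdim s := by
  let φ := (AffineMap.id ℝ E).prod f
  have himage : closedRegionBetween f g s = φ '' s := by
    ext ⟨x, y⟩
    constructor
    · rintro ⟨hx, hfy, hyg⟩
      exact ⟨x, hx, Prod.ext rfl (hfy.antisymm (hyg.trans_eq (hfg hx).symm))⟩
    · rintro ⟨x, hx, ⟨⟩⟩
      exact ⟨hx, le_rfl, (hfg hx).le⟩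
  have hinj : Function.Injective φ.linear := fun _ _ h ↦ congrArg Prod.fst h
  rw [sdim, sdim, himage, direction_affineSpan, direction_affineSpan, ← φ.map_vectorSpan]
  exact ((vectorSpan ℝ s).equivMapOfInjective φ.linear hinj).finrank_eq.symm

end Dimension

section RegionOverSimplex

variable {ι E : Type*} [NormedAddCommGroup E] [NormedSpace ℝ E]

theorem not_isSimplexWith_closedRegionBetween {f g : E → ℝ} {s : Set E} {x y : E}
    (hx : x ∈ s.extremePoints ℝ) (hy : y ∈ s.extremePoints ℝ) (hxy : x ≠ y)
    (hfgx : f x < g x) (hfgy : f y < g y) (n : ℕ) :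
    ¬ IsSimplexWith n (closedRegionBetween f g s) := by
  rintro ⟨w, hw, hregion⟩
  have hvertex {z : E} {c : ℝ} (hz : z ∈ s.extremePoints ℝ) (hle : f z ≤ g z)
      (hc : c = f z ∨ c = g z) : (z, c) ∈ Set.range w := by
    have hextreme : (z, c) ∈ (closedRegionBetween f g s).extremePoints ℝ :=
      mk_mem_extremePoints_closedRegionBetween hz (by rwa [Set.extremePoints_Icc hle])
    rw [hregion] at hextreme
    exact extremePoints_convexHull_subset hextreme
  obtain ⟨x₀, hx₀⟩ := hvertex hx hfgx.le (Or.inl rfl)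
  obtain ⟨x₁, hx₁⟩ := hvertex hx hfgx.le (Or.inr rfl)
  obtain ⟨y₀, hy₀⟩ := hvertex hy hfgy.le (Or.inl rfl)
  obtain ⟨y₁, hy₁⟩ := hvertex hy hfgy.le (Or.inr rfl)
  have hdisj : Disjoint ({x₀, y₁} : Set (Fin n)) {x₁, y₀} := by
    have hxx : x₁ ≠ x₀ := ne_of_apply_ne w (by simp [hx₀, hx₁, hfgx.ne'])
    have hxy₀ : y₀ ≠ x₀ := ne_of_apply_ne w (by simp [hx₀, hy₀, hxy.symm])
    have hxy₁ : x₁ ≠ y₁ := ne_of_apply_ne w (by simp [hx₁, hy₁, hxy])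
    have hyy : y₀ ≠ y₁ := ne_of_apply_ne w (by simp [hy₀, hy₁, hfgy.ne])
    simp [hxx, hxy₀, hxy₁, hyy]
  -- The diagonals cross at the point dividing both in the ratio of the two parallel sides.
  let t := (g x - f x) / ((g x - f x) + (g y - f y))
  have hcross : AffineMap.lineMap (w x₀) (w y₁) t = AffineMap.lineMap (w x₁) (w y₀) t := by
    have hpos : 0 < (g x - f x) + (g y - f y) := by linarith
    have ht : t * ((g x - f x) + (g y - f y)) = g x - f x := div_mul_cancel₀ _ hpos.ne'
    rw [hx₀, hx₁, hy₀, hy₁]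
    ext
    · simp [AffineMap.lineMap_apply_module]
    · simp only [AffineMap.lineMap_apply_module, Prod.snd_add, Prod.smul_snd, smul_eq_mul]
      linear_combination ht
  have hspan := hw.affineSpan_disjoint_of_disjoint hdisj
  rw [Set.image_pair, Set.image_pair] at hspan
  exact Set.disjoint_left.1 hspan (AffineMap.lineMap_mem_affineSpan_pair t _ _)
    (hcross ▸ AffineMap.lineMap_mem_affineSpan_pair t _ _)

variable [Fintype ι] {v : ι → E}

theorem isFacetOf_closedRegionBetween (hv : AffineIndependent ℝ v) {f g : E → ℝ}
    (hfg : ∀ x ∈ convexHull ℝ (Set.range v), f x ≤ g x) {i j : ι} (hji : j ≠ i)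
    (hj : f (v j) < g (v j)) :
    IsFacetOf (Fintype.card ι) (closedRegionBetween f g (convexHull ℝ (Set.range v)))
      (closedRegionBetween f g (convexHull ℝ (v '' {i}ᶜ))) := by
  classical
  have hexposed := isExposed_convexHull_image hv {i}ᶜ
  refine ⟨isExposed_closedRegionBetween hfg hexposed, ?_⟩
  have hjmem : v j ∈ convexHull ℝ (v '' {i}ᶜ) := subset_convexHull ℝ _ ⟨j, hji, rfl⟩
  have : Nonempty ({i}ᶜ : Set ι) := ⟨⟨j, hji⟩⟩
  have : FiniteDimensional ℝ (vectorSpan ℝ (convexHull ℝ (v '' {i}ᶜ))) := by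
    rw [← direction_affineSpan, affineSpan_convexHull, direction_affineSpan]
    exact finiteDimensional_vectorSpan_of_finite ℝ (Set.toFinite _)
  rw [sdim_closedRegionBetween (fun x hx ↦ hfg x (hexposed.subset hx)) hjmem hj,
    Set.image_eq_range, sdim_convexHull_range_add_one (hv.subtype {i}ᶜ), Fintype.card_compl_set,
    Set.card_singleton]

theorem exists_ne_of_card_le_sdim_closedRegionBetween [Nonempty ι] (hv : AffineIndependent ℝ v)
    {f g : E →ᵃ[ℝ] ℝ}
    (hdim : Fintype.card ι ≤ sdim (closedRegionBetween f g (convexHull ℝ (Set.range v)))) :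
    ∃ j, f (v j) ≠ g (v j) := by
  by_contra! h
  have hEqOn : Set.EqOn f g (convexHull ℝ (Set.range v)) :=
    (AffineMap.eqOn_affineSpan (Set.forall_mem_range.2 h)).mono (convexHull_subset_affineSpan _)
  have hcard := sdim_convexHull_range_add_one hv
  rw [sdim_closedRegionBetween_of_eqOn hEqOn] at hdim
  omega

theorem isSimplexWith_closedRegionBetween (hv : AffineIndependent ℝ v) {f g : E →ᵃ[ℝ] ℝ} {j : ι}
    (hj : f (v j) < g (v j)) (heq : ∀ k, k ≠ j → f (v k) = g (v k)) :
    IsSimplexWith (Fintype.card ι + 1)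
      (closedRegionBetween f g (convexHull ℝ (Set.range v))) := by
  have hle : ∀ x ∈ Set.range v, f x ≤ g x := by
    rintro _ ⟨k, rfl⟩
    by_cases hk : k = j
    exacts [hk ▸ hj.le, (heq k hk).le]
  let top : ι → E × ℝ := fun k ↦ (v k, g (v k))
  have hvertices : (fun x ↦ (x, f x)) '' Set.range v ∪ (fun x ↦ (x, g x)) '' Set.range v =
      insert (v j, f (v j)) (Set.range top) := by
    rw [← Set.range_comp, ← Set.range_comp]
    refine Set.Subset.antisymm ?_ (Set.insert_subset (Or.inl ⟨j, rfl⟩) Set.subset_union_right)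
    rintro _ (⟨k, rfl⟩ | ⟨k, rfl⟩)
    · by_cases hk : k = j
      · exact Or.inl (hk ▸ rfl)
      · exact Or.inr ⟨k, Prod.ext rfl (heq k hk).symm⟩
    · exact Or.inr ⟨k, rfl⟩
  have htop : AffineIndependent ℝ top :=
    AffineIndependent.of_comp (LinearMap.fst ℝ E ℝ).toAffineMap hv
  have hgraph : ∀ p ∈ affineSpan ℝ (Set.range top), g p.1 = p.2 :=
    AffineMap.eqOn_affineSpan (f := g.comp (LinearMap.fst ℝ E ℝ).toAffineMap)
      (g := (LinearMap.snd ℝ E ℝ).toAffineMap) (Set.forall_mem_range.2 fun _ ↦ rfl)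
  rw [closedRegionBetween_convexHull hle, hvertices]
  exact isSimplexWith_convexHull_insert htop fun hmem ↦ hj.ne' (hgraph _ hmem)

theorem stmt9_general (hι : 3 ≤ Fintype.card ι) (hv : AffineIndependent ℝ v) {f g : E →ᵃ[ℝ] ℝ}
    (hfg : ∀ x ∈ convexHull ℝ (Set.range v), f x ≤ g x)
    (hP : IsSimplicialPolytope (Fintype.card ι)
      (closedRegionBetween f g (convexHull ℝ (Set.range v)))) :
    IsSimplexWith (Fintype.card ι + 1) (closedRegionBetween f g (convexHull ℝ (Set.range v))) ∧
      ∃! i, f (v i) ≠ g (v i) := by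
  classical
  obtain ⟨-, hdim, hfacet⟩ := hP
  have : Nonempty ι := Fintype.card_pos_iff.1 (by omega)
  have hlt {i : ι} (hi : f (v i) ≠ g (v i)) : f (v i) < g (v i) :=
    (hfg _ (subset_convexHull ℝ _ ⟨i, rfl⟩)).lt_of_ne hi
  obtain ⟨j, hj⟩ := exists_ne_of_card_le_sdim_closedRegionBetween hv hdim.ge
  have heq : ∀ k, k ≠ j → f (v k) = g (v k) := by
    intro k hkj
    by_contra hk
    obtain ⟨i, -, hi⟩ : ∃ i ∈ (Finset.univ : Finset ι), i ∉ ({j, k} : Finset ι) :=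
      Finset.exists_mem_notMem_of_card_lt_card (Finset.card_le_two.trans_lt hι)
    obtain ⟨hij, hik⟩ : i ≠ j ∧ i ≠ k := by simpa using hi
    have hextreme {l : ι} (hl : l ≠ i) : v l ∈ (convexHull ℝ (v '' {i}ᶜ)).extremePoints ℝ := by
      rw [Set.image_eq_range]
      exact mem_extremePoints_convexHull_range (hv.subtype {i}ᶜ) ⟨l, hl⟩
    exact not_isSimplexWith_closedRegionBetween (hextreme hij.symm) (hextreme hik.symm)
      (hv.injective.ne hkj.symm) (hlt hj) (hlt hk) _
      (hfacet _ (isFacetOf_closedRegionBetween hv hfg hij.symm (hlt hj)))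
  exact ⟨isSimplexWith_closedRegionBetween hv (hlt hj) heq, j, hj,
    fun k hk ↦ by_contra fun hkj ↦ hk (heq k hkj)⟩

end RegionOverSimplex

/-- Let `d ≥ 3` and let `P ⊆ ℝ^{d-1} × ℝ` be a `d`-dimensional simplicial
polytope of the form `P = {(x, y) : x ∈ S, -f x ≤ y ≤ f x}` where `S` is a `(d-1)`-dimensional
simplex with vertices `v 1, …, v d` and `f` is affine and nonnegative on `S`. Then `P` is a
simplex; equivalently, `f (v i) ≠ 0` for exactly one index `i`. -/
theorem stmt9 {d : ℕ} (hd : 3 ≤ d)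
    (v : Fin d → EuclideanSpace ℝ (Fin (d - 1))) (hvind : AffineIndependent ℝ v)
    (S : Set (EuclideanSpace ℝ (Fin (d - 1)))) (hS : S = convexHull ℝ (Set.range v))
    (f : EuclideanSpace ℝ (Fin (d - 1)) →ᵃ[ℝ] ℝ) (hf : ∀ x ∈ S, 0 ≤ f x)
    (P : Set (EuclideanSpace ℝ (Fin (d - 1)) × ℝ))
    (hP : P = {p : EuclideanSpace ℝ (Fin (d - 1)) × ℝ |
      p.1 ∈ S ∧ -f p.1 ≤ p.2 ∧ p.2 ≤ f p.1})
    (hsimp : IsSimplicialPolytope d P) :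
    IsSimplexWith (d + 1) P ∧ (∃! i : Fin d, f (v i) ≠ 0) := by
  subst hS hP
  have hfg : ∀ x ∈ convexHull ℝ (Set.range v), (-f) x ≤ f x := fun x hx ↦ neg_le_self (hf x hx)
  simpa [closedRegionBetween, neg_eq_self] using
    stmt9_general (by simpa using hd) hvind hfg (by simpa [closedRegionBetween] using hsimp)

end
end

section
/- Let Y be a random vector uniformly distributed on the standard simplex Δ^{d−1} = conv{ e_1, …, e_d } ⊆ ℝ^d, let v_1, …, v_d be vectors in a Euclidean space ℝ^n, let V be the linear map sending e_i to v_i, and fix k ∈ {1, …, d}. Then E[ ‖V Y‖² · Y_k ] = (2 / (d(d+1)(d+2))) · Σ_{1 ≤ i ≤ j ≤ d} (1 + δ_{ki} + δ_{kj}) ⟨v_i, v_j⟩, where δ is the Kronecker delta. Consequently, E[ ‖V Y‖² · Y_k ] / E[Y_k] = (2 / ((d+1)(d+2))) · Σ_{1 ≤ i ≤ j ≤ d} (1 + δ_{ki} + δ_{kj}) ⟨v_i, v_j⟩. -/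
open MeasureTheory Finset
open scoped ProbabilityTheory
open scoped RealInnerProductSpace

noncomputable section

/-!
With `d = m + 1`, an affine chart turns the Hausdorff measure on the simplex into a constant
multiple of Lebesgue measure on `ℝ^m`, and the constant cancels in the normalization. The functions
`x ^ n / n!` on the half-line are the convolution powers of the Heaviside function, so
`∫ ∏ i, x i ^ e i / (e i)!` over the simplex is an iterated convolution evaluated at `1`, namely
`1 / (m + ∑ i, e i)!`. Hence multiplying a monomial `y ^ e` by `y k` multiplies its mean by
`(e k + 1) / (d + ∑ i, e i)`; three such steps give `E[Y_i Y_j Y_k]`, and expanding the square and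
folding the symmetric sum over `(i, j)` onto `i ≤ j` gives the formula.
-/

open scoped Nat ENNReal NNReal

section FiniteSums

variable {ι : Type*} [Fintype ι]

theorem prod_pow_add_single {M : Type*} [DecidableEq ι] [CommMonoid M]
    (y : ι → M) (e : ι → ℕ) (i : ι) :
    ∏ l, y l ^ (e + Pi.single i 1 : ι → ℕ) l = (∏ l, y l ^ e l) * y i := by
  simp only [Pi.add_apply, pow_add, prod_mul_distrib]
  simp [Pi.single_apply]

theorem prod_factorial_add_single [DecidableEq ι] (e : ι → ℕ) (i : ι) :
    ∏ l, ((e + Pi.single i 1 : ι → ℕ) l)! = (e i + 1) * ∏ l, (e l)! := by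
  have hfac (l : ι) :
      ((e + Pi.single i 1 : ι → ℕ) l)! = (if l = i then e i + 1 else 1) * (e l)! := by
    rcases eq_or_ne l i with rfl | hl
    · simp [Nat.factorial_succ]
    · simp [hl]
  simp only [hfac, prod_mul_distrib]
  simp

theorem sum_sum_one_add_ite_eq_mul {R : Type*} [LinearOrder ι] [NonAssocSemiring R]
    {g : ι → ι → R} (hg : ∀ i j, g i j = g j i) :
    ∑ i, ∑ j, (1 + if j = i then 1 else 0) * g i j = 2 * ∑ i, ∑ j, if i ≤ j then g i j else 0 := by
  have hswap : ∑ i, ∑ j, (if i ≤ j then g i j else 0) = ∑ i, ∑ j, if j ≤ i then g i j else 0 := by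
    rw [sum_comm]
    simp only [fun i j => hg j i]
  rw [two_mul]
  nth_rewrite 2 [hswap]
  simp only [← sum_add_distrib]
  refine sum_congr rfl fun i _ => sum_congr rfl fun j _ => ?_
  rcases lt_trichotomy i j with hij | rfl | hij
  · simp [hij.le, hij.ne', not_le.2 hij]
  · simp [add_mul]
  · simp [hij.le, hij.ne, not_le.2 hij]

theorem norm_sum_smul_sq {E : Type*} [SeminormedAddCommGroup E] [InnerProductSpace ℝ E]
    (y : ι → ℝ) (v : ι → E) :
    ‖∑ i, y i • v i‖ ^ 2 = ∑ i, ∑ j, ⟪v i, v j⟫ * (y i * y j) := by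
  rw [← real_inner_self_eq_norm_sq, sum_inner]
  refine sum_congr rfl fun i _ => ?_
  rw [inner_sum]
  refine sum_congr rfl fun j _ => ?_
  rw [real_inner_smul_left, real_inner_smul_right]
  ring

end FiniteSums

section DirichletIntegral

/-- The truncated divided power `x ^ n / n!` for `0 ≤ x`, extended by zero. Products of these
functions encode the inequalities cutting out a simplex in their supports. -/
def truncPow (n : ℕ) : ℝ → ℝ≥0∞ :=
  (Set.Ici 0).indicator fun x => ENNReal.ofReal (x ^ n / n !)

@[fun_prop]
theorem measurable_truncPow (n : ℕ) : Measurable (truncPow n) :=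
  Measurable.indicator (by fun_prop) measurableSet_Ici

theorem truncPow_of_nonneg (n : ℕ) {x : ℝ} (hx : 0 ≤ x) :
    truncPow n x = ENNReal.ofReal (x ^ n / n !) :=
  Set.indicator_of_mem (Set.mem_Ici.2 hx) _

theorem truncPow_of_neg (n : ℕ) {x : ℝ} (hx : x < 0) : truncPow n x = 0 :=
  Set.indicator_of_notMem (Set.notMem_Ici.2 hx) _

theorem prod_truncPow_of_nonneg {ι : Type*} [Fintype ι] (e : ι → ℕ) {x : ι → ℝ}
    (hx : ∀ i, 0 ≤ x i) :
    ∏ i, truncPow (e i) (x i) = ENNReal.ofReal (∏ i, x i ^ e i / (e i)!) := by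
  rw [ENNReal.ofReal_prod_of_nonneg fun i _ => div_nonneg (pow_nonneg (hx i) _) (by positivity)]
  exact prod_congr rfl fun i _ => truncPow_of_nonneg _ (hx i)

theorem truncPow_succ_eq_lintegral (n : ℕ) (s : ℝ) :
    truncPow (n + 1) s = ∫⁻ x in Set.Icc 0 s, ENNReal.ofReal (x ^ n / n !) := by
  rcases lt_or_ge s 0 with hs | hs
  · simp [truncPow_of_neg _ hs, Set.Icc_eq_empty (not_le.2 hs)]
  · have hint : ∫ x in Set.Icc 0 s, x ^ n / n ! = s ^ (n + 1) / (n + 1)! := by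
      rw [integral_Icc_eq_integral_Ioc, ← intervalIntegral.integral_of_le hs,
        intervalIntegral.integral_div, integral_pow, Nat.factorial_succ]
      push_cast
      field_simp
      simp
    rw [truncPow_of_nonneg _ hs, ← hint, ofReal_integral_eq_lintegral_ofReal]
    · exact (Continuous.continuousOn (by fun_prop)).integrableOn_compact isCompact_Icc
    · filter_upwards [ae_restrict_mem measurableSet_Icc] with x hx
      have := hx.1
      simp only [Pi.zero_apply]
      positivity

theorem truncPow_lconvolution_truncPow_zero (n : ℕ) :
    truncPow n ⋆ₗ truncPow 0 = truncPow (n + 1) := by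
  funext s
  rw [lconvolution_def, truncPow_succ_eq_lintegral, ← lintegral_indicator measurableSet_Icc]
  refine lintegral_congr fun x => ?_
  rcases lt_or_ge x 0 with hx | hx
  · simp [truncPow_of_neg _ hx, hx]
  rcases lt_or_ge s x with hxs | hxs
  · rw [truncPow_of_neg 0 (by linarith), mul_zero, Set.indicator_of_notMem (by simp [hxs])]
  · rw [truncPow_of_nonneg n hx, truncPow_of_nonneg 0 (by linarith),
      Set.indicator_of_mem (Set.mem_Icc.2 ⟨hx, hxs⟩)]
    simp

-- `truncPow n` is the `(n + 1)`-st convolution power of the Heaviside function `truncPow 0`.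
theorem truncPow_lconvolution_truncPow (a b : ℕ) :
    truncPow a ⋆ₗ truncPow b = truncPow (a + b + 1) := by
  induction b with
  | zero => exact truncPow_lconvolution_truncPow_zero a
  | succ b ih =>
    rw [← truncPow_lconvolution_truncPow_zero b, lconvolution_assoc (measurable_truncPow a)
      (measurable_truncPow b) (measurable_truncPow 0), ih, truncPow_lconvolution_truncPow_zero,
      add_assoc a b 1]

theorem lintegral_piFin_succ {m : ℕ} {F : (Fin (m + 1) → ℝ) → ℝ≥0∞} (hF : Measurable F) :
    ∫⁻ x, F x = ∫⁻ t : ℝ, ∫⁻ x : Fin m → ℝ, F (Fin.cons t x) := by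
  have hmp := (volume_preserving_piFinSuccAbove (fun _ : Fin (m + 1) => ℝ) 0).symm
  rw [← hmp.lintegral_comp hF, Measure.volume_eq_prod,
    lintegral_prod _ (by fun_prop)]
  simp [MeasurableEquiv.piFinSuccAbove, Fin.consEquiv]

theorem lintegral_prod_truncPow_mul_truncPow {m : ℕ} (a : Fin m → ℕ) (b : ℕ) (s : ℝ) :
    ∫⁻ x : Fin m → ℝ, (∏ i, truncPow (a i) (x i)) * truncPow b (s - ∑ i, x i) =
      truncPow (m + ∑ i, a i + b) s := by
  induction m generalizing s with
  | zero => simp [lintegral_unique, Measure.volume_pi_eq_dirac 0]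
  | succ m ih =>
    calc
      _ = ∫⁻ t, truncPow (a 0) t * truncPow (m + ∑ i : Fin m, a i.succ + b) (-t + s) := by
        rw [lintegral_piFin_succ (by fun_prop)]
        refine lintegral_congr fun t => ?_
        rw [← ih, ← lintegral_const_mul _ (by fun_prop)]
        refine lintegral_congr fun x => ?_
        simp only [Fin.prod_univ_succ, Fin.sum_univ_succ, Fin.cons_zero, Fin.cons_succ, mul_assoc]
        ring_nf
      _ = truncPow (a 0 + (m + ∑ i : Fin m, a i.succ + b) + 1) s := by
        rw [← truncPow_lconvolution_truncPow, lconvolution_def]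
      _ = truncPow (m + 1 + ∑ i, a i + b) s := by
        rw [Fin.sum_univ_succ]
        congr 1
        ring

end DirichletIntegral

section HausdorffMeasure

variable {V E : Type*} [NormedAddCommGroup V] [NormedSpace ℝ V] [FiniteDimensional ℝ V]
  [MeasurableSpace V] [BorelSpace V] [NormedAddCommGroup E] [NormedSpace ℝ E]
  [MeasurableSpace E] [BorelSpace E]

-- `f` is a linear isomorphism onto its direction followed by an isometry, and on the direction
-- the Hausdorff measure is a Haar measure.
theorem exists_hausdorffMeasure_restrict_range_eq_smul_map (f : V →ᵃ[ℝ] E)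
    (hf : Function.Injective f) (μ : Measure V) [μ.IsAddHaarMeasure] :
    ∃ c : ℝ≥0, 0 < c ∧
      (μH[Module.finrank ℝ V] : Measure E).restrict (Set.range f) = c • μ.map f := by
  have hlin : Function.Injective f.linear := f.linear_injective_iff.2 hf
  let W := LinearMap.range f.linear
  let e : V ≃L[ℝ] W := (LinearEquiv.ofInjective f.linear hlin).toContinuousLinearEquiv
  let τ : W → E := fun w => w + f 0
  have hτ : Isometry τ := (isometry_add_right (f 0)).comp isometry_subtype_coe
  have hfτ : f = τ ∘ e := by
    funext x
    simpa [τ, e] using congr_fun f.decomp x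
  have hrange : Set.range f = Set.range τ := by rw [hfτ, e.surjective.range_comp]
  have hdim : Module.finrank ℝ W = Module.finrank ℝ V := LinearMap.finrank_range_of_inj hlin
  have hHaar : (μH[Module.finrank ℝ V] : Measure W).IsAddHaarMeasure :=
    hdim ▸ isAddHaarMeasure_hausdorffMeasure
  have hscale := Measure.isAddLeftInvariant_eq_smul (μH[Module.finrank ℝ V] : Measure W) (μ.map e)
  refine ⟨_, Measure.addHaarScalarFactor_pos_of_isAddHaarMeasure μH[Module.finrank ℝ V]
    (μ.map e), ?_⟩
  conv_lhs => rw [hrange, ← hτ.map_hausdorffMeasure (.inl (Nat.cast_nonneg _)), hscale]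
  rw [Measure.map_smul, hfτ, Measure.map_map hτ.continuous.measurable e.continuous.measurable]

end HausdorffMeasure

section EuclideanSimplex

variable {ι : Type*} [Fintype ι] [DecidableEq ι]

/-- The standard simplex, the convex hull of the standard basis vectors; Mathlib's `stdSimplex`
is the same set in the function space `ι → ℝ`, which carries the sup norm. -/
def euclideanSimplex (ι : Type*) [Fintype ι] [DecidableEq ι] : Set (EuclideanSpace ℝ ι) :=
  convexHull ℝ (Set.range fun i : ι => EuclideanSpace.single i (1 : ℝ))

theorem mem_euclideanSimplex {y : EuclideanSpace ℝ ι} :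
    y ∈ euclideanSimplex ι ↔ (∀ i, 0 ≤ y i) ∧ ∑ i, y i = 1 := by
  let L := (WithLp.linearEquiv 2 ℝ (ι → ℝ)).toLinearMap
  have himage : L '' euclideanSimplex ι = stdSimplex ℝ ι := by
    rw [euclideanSimplex, L.image_convexHull, ← Set.range_comp,
      ← convexHull_rangle_single_eq_stdSimplex]
    rfl
  have hL : Function.Injective L := (WithLp.linearEquiv 2 ℝ (ι → ℝ)).injective
  rw [← hL.mem_set_image, himage]
  rfl

theorem isCompact_euclideanSimplex : IsCompact (euclideanSimplex ι) :=
  (Set.finite_range _).isCompact_convexHull ℝ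

theorem measurableSet_euclideanSimplex : MeasurableSet (euclideanSimplex ι) :=
  isCompact_euclideanSimplex.measurableSet

theorem indicator_euclideanSimplex_prod (e : ι → ℕ) {y : EuclideanSpace ℝ ι}
    (hy : ∑ i, y i = 1) :
    (euclideanSimplex ι).indicator (fun y => ENNReal.ofReal (∏ i, y i ^ e i / (e i)!)) y =
      ∏ i, truncPow (e i) (y i) := by
  by_cases hpos : ∀ i, 0 ≤ y i
  · rw [Set.indicator_of_mem (mem_euclideanSimplex.2 ⟨hpos, hy⟩), prod_truncPow_of_nonneg e hpos]
  · rw [Set.indicator_of_notMem fun h => hpos (mem_euclideanSimplex.1 h).1]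
    push Not at hpos
    obtain ⟨i, hi⟩ := hpos
    exact (prod_eq_zero (mem_univ i) (truncPow_of_neg _ hi)).symm

/-- The affine chart `x ↦ (1 - ∑ i, x i, x)` of the hyperplane `∑ i, y i = 1`. -/
def simplexChart (m : ℕ) : (Fin m → ℝ) →ᵃ[ℝ] Euc (m + 1) :=
  (WithLp.linearEquiv 2 ℝ (Fin (m + 1) → ℝ)).symm.toLinearMap.toAffineMap.comp <|
    AffineMap.pi <| Fin.cons
      (AffineMap.const ℝ _ 1 - (∑ i, LinearMap.proj i : (Fin m → ℝ) →ₗ[ℝ] ℝ).toAffineMap)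
      AffineMap.proj

@[simp]
theorem simplexChart_zero {m : ℕ} (x : Fin m → ℝ) : simplexChart m x 0 = 1 - ∑ i, x i := by
  simp [simplexChart]

@[simp]
theorem simplexChart_succ {m : ℕ} (x : Fin m → ℝ) (i : Fin m) :
    simplexChart m x i.succ = x i := by
  simp [simplexChart]

theorem injective_simplexChart (m : ℕ) : Function.Injective (simplexChart m) := fun x y h =>
  funext fun i => by simpa using congr_arg (fun z : Euc (m + 1) => z i.succ) h

theorem range_simplexChart (m : ℕ) :
    Set.range (simplexChart m) = {y : Euc (m + 1) | ∑ i, y i = 1} := by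
  ext y
  simp only [Set.mem_range, Set.mem_ofPred_eq, Fin.sum_univ_succ]
  constructor
  · rintro ⟨x, rfl⟩
    simp
  · refine fun hy => ⟨fun i => y i.succ, ?_⟩
    ext i
    refine Fin.cases ?_ (fun j => ?_) i
    · simp [← hy]
    · simp

theorem exists_setLIntegral_prod_pow_euclideanSimplex (m : ℕ) :
    ∃ c : ℝ≥0, 0 < c ∧ ∀ e : Fin (m + 1) → ℕ,
      ∫⁻ y in euclideanSimplex (Fin (m + 1)), ENNReal.ofReal (∏ i, y i ^ e i / (e i)!) ∂μH[m] =
        c * ENNReal.ofReal (1 / (m + ∑ i, e i)!) := by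
  obtain ⟨c, hc, hmap⟩ := exists_hausdorffMeasure_restrict_range_eq_smul_map (simplexChart m)
    (injective_simplexChart m) volume
  have hsub : euclideanSimplex (Fin (m + 1)) ⊆ Set.range (simplexChart m) := by
    rw [range_simplexChart]
    exact fun y hy => (mem_euclideanSimplex.1 hy).2
  rw [Module.finrank_fin_fun] at hmap
  have hchart : Measurable (simplexChart m) :=
    (simplexChart m).continuous_of_finiteDimensional.measurable
  refine ⟨c, hc, fun e => ?_⟩
  calc
    _ = ∫⁻ y in Set.range (simplexChart m), (euclideanSimplex (Fin (m + 1))).indicator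
          (fun y => ENNReal.ofReal (∏ i, y i ^ e i / (e i)!)) y ∂μH[m] := by
      rw [setLIntegral_indicator measurableSet_euclideanSimplex, Set.inter_eq_left.2 hsub]
    _ = c * ∫⁻ x : Fin m → ℝ, ∏ i, truncPow (e i) (simplexChart m x i) := by
      rw [hmap, lintegral_smul_measure, ENNReal.smul_def, smul_eq_mul, lintegral_map
        (Measurable.indicator (by fun_prop) measurableSet_euclideanSimplex) hchart]
      congr 1
      refine lintegral_congr fun x => indicator_euclideanSimplex_prod e ?_
      simp [Fin.sum_univ_succ]
    _ = c * truncPow (m + ∑ i : Fin m, e i.succ + e 0) 1 := by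
      simp only [← lintegral_prod_truncPow_mul_truncPow, Fin.prod_univ_succ, simplexChart_zero,
        simplexChart_succ, mul_comm]
    _ = c * ENNReal.ofReal (1 / (m + ∑ i, e i)!) := by
      rw [truncPow_of_nonneg _ zero_le_one, one_pow, Fin.sum_univ_succ, add_comm (e 0), add_assoc]

end EuclideanSimplex

section UniformSimplex

/-- The uniform distribution on the standard simplex in `ℝ^d`: the normalized
`(d - 1)`-dimensional Hausdorff measure. -/
def uniformSimplex (d : ℕ) : Measure (Euc d) :=
  ProbabilityTheory.cond μH[(d - 1 : ℝ)] (euclideanSimplex (Fin d))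

theorem integral_uniformSimplex {d : ℕ} (f : Euc d → ℝ) :
    ∫ y, f y ∂uniformSimplex d =
      (∫ y in euclideanSimplex (Fin d), f y ∂μH[(d - 1 : ℝ)]) /
        (μH[(d - 1 : ℝ)] (euclideanSimplex (Fin d))).toReal := by
  rw [uniformSimplex, ProbabilityTheory.cond, integral_smul_measure, ENNReal.toReal_inv,
    smul_eq_mul, inv_mul_eq_div]

theorem ae_mem_euclideanSimplex (d : ℕ) :
    ∀ᵐ y ∂uniformSimplex d, y ∈ euclideanSimplex (Fin d) :=
  ProbabilityTheory.ae_cond_mem measurableSet_euclideanSimplex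

instance (d : ℕ) : IsZeroOrProbabilityMeasure (uniformSimplex d) :=
  inferInstanceAs (IsZeroOrProbabilityMeasure (ProbabilityTheory.cond _ _))

theorem integrable_uniformSimplex_of_continuous {d : ℕ} {f : Euc d → ℝ} (hf : Continuous f) :
    Integrable f (uniformSimplex d) := by
  obtain ⟨C, hC⟩ := isCompact_euclideanSimplex.exists_bound_of_continuousOn hf.continuousOn
  exact .of_bound hf.aestronglyMeasurable C ((ae_mem_euclideanSimplex d).mono hC)

theorem lintegral_prod_pow_uniformSimplex {m : ℕ} (e : Fin (m + 1) → ℕ) :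
    ∫⁻ y, ENNReal.ofReal (∏ i, y i ^ e i / (e i)!) ∂uniformSimplex (m + 1) =
      ENNReal.ofReal (m ! / (m + ∑ i, e i)!) := by
  obtain ⟨c, hc, hmom⟩ := exists_setLIntegral_prod_pow_euclideanSimplex m
  have hvol : μH[m] (euclideanSimplex (Fin (m + 1))) = c * ENNReal.ofReal (1 / m !) := by
    simpa using hmom 0
  have hdim : ((m + 1 : ℕ) : ℝ) - 1 = m := by simp
  have hc' : (0 : ℝ) < c := hc
  rw [uniformSimplex, ProbabilityTheory.cond, lintegral_smul_measure, hdim, hmom, hvol,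
    smul_eq_mul, ← ENNReal.ofReal_coe_nnreal, ← ENNReal.ofReal_mul hc'.le,
    ← ENNReal.ofReal_mul hc'.le, ← ENNReal.ofReal_inv_of_pos (by positivity),
    ← ENNReal.ofReal_mul (by positivity)]
  congr 1
  field_simp

theorem integral_prod_pow_uniformSimplex {m : ℕ} (e : Fin (m + 1) → ℕ) :
    ∫ y, ∏ i, y i ^ e i ∂uniformSimplex (m + 1) =
      m ! * (∏ i, ((e i)! : ℝ)) / (m + ∑ i, e i)! := by
  have hnonneg : 0 ≤ᵐ[uniformSimplex (m + 1)] fun y => ∏ i, y i ^ e i / (e i)! := by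
    filter_upwards [ae_mem_euclideanSimplex (m + 1)] with y hy
    exact prod_nonneg fun i _ =>
      div_nonneg (pow_nonneg ((mem_euclideanSimplex.1 hy).1 i) _) (by positivity)
  have hdiv : ∫ y, ∏ i, y i ^ e i / (e i)! ∂uniformSimplex (m + 1) = m ! / (m + ∑ i, e i)! := by
    rw [integral_eq_lintegral_of_nonneg_ae hnonneg
      (Continuous.aestronglyMeasurable (by fun_prop)), lintegral_prod_pow_uniformSimplex,
      ENNReal.toReal_ofReal (by positivity)]
  simp only [prod_div_distrib, integral_div] at hdiv
  have hfac : ∏ i, ((e i)! : ℝ) ≠ 0 := prod_ne_zero_iff.2 fun i _ => by positivity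
  rw [(div_eq_iff hfac).1 hdiv]
  ring

variable {d : ℕ}

theorem integral_prod_pow_mul_uniformSimplex (e : Fin d → ℕ) (k : Fin d) :
    ∫ y, (∏ i, y i ^ e i) * y k ∂uniformSimplex d =
      (e k + 1) / (d + ∑ i, e i) * ∫ y, ∏ i, y i ^ e i ∂uniformSimplex d := by
  obtain ⟨m, rfl⟩ := Nat.exists_eq_succ_of_ne_zero k.pos.ne'
  have hfac : ((m + ∑ i, (e + Pi.single k 1 : Fin (m + 1) → ℕ) i)! : ℝ) =
      (m + 1 + ∑ i, e i) * (m + ∑ i, e i)! := by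
    have hsum : m + ∑ i, (e + Pi.single k 1 : Fin (m + 1) → ℕ) i = m + ∑ i, e i + 1 := by
      simp [sum_add_distrib, add_assoc]
    rw [hsum, Nat.factorial_succ]
    push_cast
    ring
  simp only [← prod_pow_add_single, integral_prod_pow_uniformSimplex, hfac,
    ← Nat.cast_prod, prod_factorial_add_single]
  push_cast
  field_simp

theorem integral_apply_uniformSimplex (i : Fin d) : ∫ y, y i ∂uniformSimplex d = 1 / d := by
  obtain ⟨m, rfl⟩ := Nat.exists_eq_succ_of_ne_zero i.pos.ne'
  have htotal : ∫ y, ∏ l, y l ^ (0 : Fin (m + 1) → ℕ) l ∂uniformSimplex (m + 1) = 1 := by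
    rw [integral_prod_pow_uniformSimplex]
    simp [Nat.factorial_ne_zero]
  have hrec := integral_prod_pow_mul_uniformSimplex 0 i
  rw [htotal] at hrec
  simpa using hrec

theorem integral_mul_uniformSimplex (i j : Fin d) :
    ∫ y, y i * y j ∂uniformSimplex d = (1 + if j = i then 1 else 0) / (d * (d + 1)) := by
  have hrec := integral_prod_pow_mul_uniformSimplex (0 + Pi.single i 1) j
  simp only [prod_pow_add_single] at hrec
  calc
    _ = ((if j = i then 1 else 0) + 1) / (d + 1) * ∫ y, y i ∂uniformSimplex d := by
      simpa [Pi.single_apply] using hrec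
    _ = _ := by
      rw [integral_apply_uniformSimplex]
      field_simp
      ring

theorem integral_mul_mul_uniformSimplex (i j k : Fin d) :
    ∫ y, y i * y j * y k ∂uniformSimplex d =
      (1 + if j = i then 1 else 0) * (1 + (if k = i then 1 else 0) + if k = j then 1 else 0) /
        (d * (d + 1) * (d + 2)) := by
  have hrec := integral_prod_pow_mul_uniformSimplex (0 + Pi.single i 1 + Pi.single j 1) k
  simp only [prod_pow_add_single] at hrec
  calc
    _ = ((if k = i then 1 else 0) + (if k = j then 1 else 0) + 1) / (d + 2) *
          ∫ y, y i * y j ∂uniformSimplex d := by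
      simpa [Pi.single_apply, sum_add_distrib] using hrec
    _ = _ := by
      rw [integral_mul_uniformSimplex]
      field_simp
      ring

theorem integral_norm_sum_smul_sq_mul_uniformSimplex {E : Type*}
    [SeminormedAddCommGroup E] [InnerProductSpace ℝ E] (v : Fin d → E) (k : Fin d) :
    ∫ y, ‖∑ i, y i • v i‖ ^ 2 * y k ∂uniformSimplex d =
      2 / (d * (d + 1) * (d + 2)) * ∑ i, ∑ j, if i ≤ j then
        (1 + (if k = i then (1 : ℝ) else 0) + if k = j then (1 : ℝ) else 0) * ⟪v i, v j⟫
      else 0 := by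
  calc
    _ = ∑ i, ∑ j, ⟪v i, v j⟫ * ∫ y, y i * y j * y k ∂uniformSimplex d := by
      simp only [norm_sum_smul_sq, sum_mul, mul_assoc ⟪_, _⟫]
      rw [integral_finsetSum _ fun i _ =>
        integrable_uniformSimplex_of_continuous (by fun_prop)]
      refine sum_congr rfl fun i _ => ?_
      rw [integral_finsetSum _ fun j _ =>
        integrable_uniformSimplex_of_continuous (by fun_prop)]
      simp only [integral_const_mul]
    _ = 1 / (d * (d + 1) * (d + 2)) * ∑ i, ∑ j, (1 + if j = i then (1 : ℝ) else 0) *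
          ((1 + (if k = i then (1 : ℝ) else 0) + if k = j then (1 : ℝ) else 0) * ⟪v i, v j⟫) := by
      simp only [integral_mul_mul_uniformSimplex, mul_sum]
      refine sum_congr rfl fun i _ => sum_congr rfl fun j _ => ?_
      ring
    _ = _ := by
      rw [sum_sum_one_add_ite_eq_mul fun i j => by rw [real_inner_comm]; ring]
      ring

end UniformSimplex

theorem stmt11_general {d : ℕ} {E : Type*} [SeminormedAddCommGroup E] [InnerProductSpace ℝ E]
    (v : Fin d → E) (k : Fin d) :
    ∫ y, ‖∑ i, y i • v i‖ ^ 2 * y k ∂uniformSimplex d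
      = (2 / (d * (d + 1) * (d + 2))) *
        ∑ i, ∑ j, (if i ≤ j then
          (1 + (if k = i then (1 : ℝ) else 0) + (if k = j then (1 : ℝ) else 0)) * ⟪v i, v j⟫
        else 0) ∧
    (∫ y, ‖∑ i, y i • v i‖ ^ 2 * y k ∂uniformSimplex d) / ∫ y, y k ∂uniformSimplex d
      = (2 / ((d + 1) * (d + 2))) *
        ∑ i, ∑ j, (if i ≤ j then
          (1 + (if k = i then (1 : ℝ) else 0) + (if k = j then (1 : ℝ) else 0)) * ⟪v i, v j⟫
        else 0) := by
  have hd : (d : ℝ) ≠ 0 := Nat.cast_ne_zero.2 k.pos.ne'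
  refine ⟨integral_norm_sum_smul_sq_mul_uniformSimplex v k, ?_⟩
  rw [integral_norm_sum_smul_sq_mul_uniformSimplex, integral_apply_uniformSimplex]
  field_simp

/-- Let `Y` be uniform on the standard simplex
`Δ^{d-1} = conv{e 1, …, e d} ⊆ ℝ^d` (w.r.t. normalized `(d-1)`-dimensional Hausdorff measure),
`v 1, …, v d ∈ ℝ^n`, `V` the linear map `eᵢ ↦ vᵢ`, and `k ∈ {1, …, d}`. Then
`E[‖V Y‖² Y_k] = (2/(d(d+1)(d+2))) Σ_{i ≤ j} (1 + δ_{ki} + δ_{kj}) ⟪v i, v j⟫` and consequently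
`E[‖V Y‖² Y_k] / E[Y_k] = (2/((d+1)(d+2))) Σ_{i ≤ j} (1 + δ_{ki} + δ_{kj}) ⟪v i, v j⟫`. -/
theorem stmt11 {d n : ℕ} (hd : 1 ≤ d)
    (Δ : Set (EuclideanSpace ℝ (Fin d)))
    (hΔ : Δ = convexHull ℝ (Set.range fun i : Fin d => EuclideanSpace.single i (1 : ℝ)))
    (v : Fin d → EuclideanSpace ℝ (Fin n)) (k : Fin d) :
    (∫ y in Δ, ‖∑ i : Fin d, y i • v i‖ ^ 2 * y k ∂(μH[(d - 1 : ℝ)])) /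
        (μH[(d - 1 : ℝ)] Δ).toReal
      = (2 / (d * (d + 1) * (d + 2))) *
        ∑ i : Fin d, ∑ j : Fin d, (if i ≤ j then
          (1 + (if k = i then (1:ℝ) else 0) + (if k = j then (1:ℝ) else 0)) * ⟪v i, v j⟫
        else 0) ∧
    ((∫ y in Δ, ‖∑ i : Fin d, y i • v i‖ ^ 2 * y k ∂(μH[(d - 1 : ℝ)])) /
          (μH[(d - 1 : ℝ)] Δ).toReal) /
        ((∫ y in Δ, y k ∂(μH[(d - 1 : ℝ)])) / (μH[(d - 1 : ℝ)] Δ).toReal)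
      = (2 / ((d + 1) * (d + 2))) *
        ∑ i : Fin d, ∑ j : Fin d, (if i ≤ j then
          (1 + (if k = i then (1:ℝ) else 0) + (if k = j then (1:ℝ) else 0)) * ⟪v i, v j⟫
        else 0) := by
  subst hΔ
  simpa only [integral_uniformSimplex, euclideanSimplex] using stmt11_general v k

end
end
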